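/- arXiv:2006.05417 — 4 statements merged into one kernel-verified Lean document; each statement's English description precedes it below -/
import Mathlib

section
/- Fix an integer r ≥ 1. There exists a constant C > 0 such that for every real number x ≥ 1, the family of terms 1/(φ([n_1,…,n_r])·n_1·n_2⋯n_r), indexed by multi-indices N = (n_1,…,n_r) of positive integers with n_1 > x, is summable and its sum is at most C/x. -/
open scoped BigOperators

/-- The general term `1/(φ([n_1,…,n_r])·n_1⋯n_r)` associated to a multi-index
`N = (n_1,…,n_r)` of positive integers. -/
noncomputable def eulerTerm (r : ℕ) (N : Fin r → ℕ+) : ℝ :=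
  1 / ((Nat.totient (Finset.univ.lcm fun i => (N i : ℕ)) : ℝ) * ∏ i, ((N i : ℕ) : ℝ))

/-!
Let `h(n) = σ(n)/n = ∑_{d ∣ n} 1/d`. It is submultiplicative and increases along divisibility, and
`1/φ(n) ≤ h(n)²/n`, so it suffices to sum `h(L)²/(L·n_1⋯n_r)` with `L = [n_1,…,n_r]`.

Variables other than `n_1` are summed out one at a time: as `1/[m,n] = (m,n)/(mn)` and
`(m,n) ≤ ∑_{d ∣ m, d ∣ n} d`, writing `n = dj` gives
`∑_n h([m,n])^k/([m,n]·n) ≤ S_k·h(m)^(2k+1)/m` with `S_k = ∑_n h(n)^k/n²`. What remains is the tail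
of `S_K` for some `K`.

That tail is `O(1/x)` by induction on the exponent: expanding one factor `h(n) = ∑_{d ∣ n} 1/d` and
writing `n = dj`,
`∑_{n > x} h(n)^(k+1)/n² ≤ ∑_d (1/d)·(h(d)^k/d²)·∑_{j > x/d} h(j)^k/j² ≤ S_k·C_k/x`.
-/

open scoped ENNReal NNReal ArithmeticFunction.sigma

section DivisorSums

theorem tsum_ite_dvd (d : ℕ+) (f : ℕ → ℝ≥0∞) :
    ∑' n : ℕ+, (if (d : ℕ) ∣ n then f n else 0) = ∑' j : ℕ+, f (d * j) := by
  have mul_injective : Function.Injective (fun j : ℕ+ => d * j) := mul_right_injective d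
  rw [← mul_injective.tsum_eq]
  · simp
  · intro n hn
    obtain ⟨j, rfl⟩ := PNat.dvd_iff.2 (ite_ne_right_iff.1 hn).1
    exact ⟨j, rfl⟩

theorem sum_divisors_eq_tsum_ite_dvd {n : ℕ} (hn : n ≠ 0) (f : ℕ → ℝ≥0∞) :
    ∑ d ∈ n.divisors, f d = ∑' d : ℕ+, if (d : ℕ) ∣ n then f d else 0 := by
  rw [sum_eq_tsum_indicator, ← PNat.coe_injective.tsum_eq]
  · simp [Set.indicator_apply, hn]
  · intro d hd
    have hd_mem : d ∈ n.divisors := Set.mem_of_indicator_ne_zero hd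
    exact ⟨⟨d, Nat.pos_of_mem_divisors hd_mem⟩, rfl⟩

theorem tsum_sum_divisors (f : ℕ → ℕ → ℝ≥0∞) :
    ∑' n : ℕ+, ∑ d ∈ (n : ℕ).divisors, f d n = ∑' (d : ℕ+) (j : ℕ+), f d (d * j) := by
  simp_rw [fun n : ℕ+ => sum_divisors_eq_tsum_ite_dvd n.ne_zero (f · n)]
  rw [ENNReal.tsum_comm]
  exact tsum_congr fun d => tsum_ite_dvd d (f d)

theorem inv_lcm_eq_gcd_mul {m : ℕ} (hm : m ≠ 0) (n : ℕ) :
    (m.lcm n : ℝ≥0∞)⁻¹ = m.gcd n * ((m : ℝ≥0∞)⁻¹ * (n : ℝ≥0∞)⁻¹) := by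
  have gcd_ne_zero : (m.gcd n : ℝ≥0∞) ≠ 0 := by simp [hm]
  rw [← ENNReal.mul_inv (by simp) (by simp), ← Nat.cast_mul, ← Nat.gcd_mul_lcm, Nat.cast_mul,
    ENNReal.mul_inv (by simp) (by simp), ← mul_assoc,
    ENNReal.mul_inv_cancel gcd_ne_zero (by simp), one_mul]

theorem tsum_gcd_mul_le {f : ℕ → ℝ≥0∞} (hf : ∀ a b, f (a * b) ≤ f a * f b) {m : ℕ} (hm : m ≠ 0) :
    ∑' n : ℕ+, (m.gcd n : ℝ≥0∞) * f n ≤ (∑ d ∈ m.divisors, d * f d) * ∑' n : ℕ+, f n := by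
  have gcd_le (n : ℕ+) :
      (m.gcd n : ℝ≥0∞) ≤ ∑ d ∈ (n : ℕ).divisors, if d ∣ m then (d : ℝ≥0∞) else 0 := by
    have gcd_mem : m.gcd n ∈ (n : ℕ).divisors := by simp [Nat.gcd_dvd_right]
    simpa [Nat.gcd_dvd_left] using
      Finset.single_le_sum (f := fun d : ℕ => if d ∣ m then (d : ℝ≥0∞) else 0) (by simp) gcd_mem
  calc ∑' n : ℕ+, (m.gcd n : ℝ≥0∞) * f n
    _ ≤ ∑' n : ℕ+, ∑ d ∈ (n : ℕ).divisors, (if d ∣ m then (d : ℝ≥0∞) else 0) * f n := by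
      simp_rw [← Finset.sum_mul]
      gcongr
      exact gcd_le _
    _ = ∑' (d : ℕ+) (j : ℕ+), (if (d : ℕ) ∣ m then (d : ℝ≥0∞) else 0) * f (d * j) :=
      tsum_sum_divisors fun d n => (if d ∣ m then (d : ℝ≥0∞) else 0) * f n
    _ ≤ ∑' (d : ℕ+) (j : ℕ+), (if (d : ℕ) ∣ m then (d : ℝ≥0∞) else 0) * (f d * f j) := by
      gcongr
      exact hf _ _
    _ = (∑ d ∈ m.divisors, d * f d) * ∑' n : ℕ+, f n := by
      rw [sum_divisors_eq_tsum_ite_dvd hm fun d => d * f d, ← ENNReal.tsum_mul_right]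
      refine tsum_congr fun d => ?_
      rw [ENNReal.tsum_mul_left, ENNReal.tsum_mul_left, ← mul_assoc, ite_mul, zero_mul]

end DivisorSums

/-- The abundancy index `σ(n)/n = ∑_{d ∣ n} 1/d`, the measure of how far `φ(n)` can fall below `n`.
It takes values in `ℝ≥0∞`, unlike `Nat.abundancyIndex`, so that infinite sums need no
summability hypotheses; its value at `0` is `0`. -/
noncomputable def abundancy (n : ℕ) : ℝ≥0∞ := ∑ d ∈ n.divisors, (d : ℝ≥0∞)⁻¹

section Abundancy

theorem abundancy_le_of_dvd {m n : ℕ} (hn : n ≠ 0) (hmn : m ∣ n) : abundancy m ≤ abundancy n :=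
  Finset.sum_le_sum_of_subset (Nat.divisors_subset_of_dvd hn hmn)

theorem abundancy_mul_le (m n : ℕ) : abundancy (m * n) ≤ abundancy m * abundancy n := by
  simp only [abundancy, Finset.sum_mul_sum, ← Finset.sum_product']
  rw [Nat.divisors_mul, ← Finset.image_mul_product]
  refine (Finset.sum_image_le_of_nonneg (by simp)).trans_eq (Finset.sum_congr rfl fun p _ => ?_)
  rw [Nat.cast_mul, ENNReal.mul_inv (by simp) (by simp)]

theorem abundancy_lcm_le (m n : ℕ) : abundancy (m.lcm n) ≤ abundancy m * abundancy n := by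
  rcases eq_or_ne (m * n) 0 with hmn | hmn
  · rw [Nat.lcm, hmn]
    simp [abundancy]
  · exact (abundancy_le_of_dvd hmn (Nat.lcm_dvd_mul m n)).trans (abundancy_mul_le m n)

theorem sigma_one_eq_mul_abundancy (n : ℕ) : (σ 1 n : ℝ≥0∞) = n * abundancy n := by
  rw [ArithmeticFunction.sigma_eq_sum_div, abundancy, Finset.mul_sum, Nat.cast_sum]
  refine Finset.sum_congr rfl fun d hd => ?_
  have hd_ne_zero : d ≠ 0 := (Nat.pos_of_mem_divisors hd).ne'
  rw [pow_one, ← div_eq_mul_inv, ENNReal.eq_div_iff (by simpa) (by simp)]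
  exact_mod_cast Nat.mul_div_cancel' (Nat.dvd_of_mem_divisors hd)

/-- All factors are multiplicative, and on prime powers it suffices that `p³ ≤ (p - 1)(p + 1)²`. -/
theorem cube_le_totient_mul_sigma_sq (n : ℕ) : n ^ 3 ≤ n.totient * σ 1 n ^ 2 := by
  induction n using Nat.recOnPosPrimePosCoprime with
  | zero => simp
  | one => simp
  | prime_pow p n hp hn =>
    obtain ⟨k, rfl⟩ := Nat.exists_eq_add_one.2 hn
    obtain ⟨q, rfl⟩ := Nat.exists_eq_add_of_le' hp.two_le
    have le_sigma : (q + 2) ^ k * (q + 3) ≤ σ 1 ((q + 2) ^ (k + 1)) := by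
      rw [ArithmeticFunction.sigma_one_apply_prime_pow hp, Finset.sum_range_succ,
        Finset.sum_range_succ, add_assoc]
      exact le_add_left (by ring_nf; rfl)
    calc ((q + 2) ^ (k + 1)) ^ 3
      _ = ((q + 2) ^ k) ^ 3 * (q + 2) ^ 3 := by ring
      _ ≤ ((q + 2) ^ k) ^ 3 * ((q + 1) * (q + 3) ^ 2) := by
        gcongr
        nlinarith
      _ = (q + 2) ^ k * (q + 1) * ((q + 2) ^ k * (q + 3)) ^ 2 := by ring
      _ ≤ ((q + 2) ^ (k + 1)).totient * σ 1 ((q + 2) ^ (k + 1)) ^ 2 := by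
        rw [Nat.totient_prime_pow_succ hp, show q + 2 - 1 = q + 1 from rfl]
        gcongr
  | coprime a b _ _ hab iha ihb =>
    rw [Nat.totient_mul hab, ArithmeticFunction.isMultiplicative_sigma.map_mul_of_coprime hab]
    linarith [Nat.mul_le_mul iha ihb]

theorem le_totient_mul_abundancy_sq (n : ℕ) : (n : ℝ≥0∞) ≤ n.totient * abundancy n ^ 2 := by
  rcases eq_or_ne n 0 with rfl | hn
  · simp
  have cube_le : (n : ℝ≥0∞) ^ 3 ≤ n.totient * (n * abundancy n) ^ 2 := by
    rw [← sigma_one_eq_mul_abundancy]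
    exact_mod_cast cube_le_totient_mul_sigma_sq n
  rw [← ENNReal.mul_le_mul_iff_right (a := (n : ℝ≥0∞) ^ 2) (by simpa) (by simp)]
  calc (n : ℝ≥0∞) ^ 2 * n
    _ = (n : ℝ≥0∞) ^ 3 := (pow_succ _ _).symm
    _ ≤ n.totient * (n * abundancy n) ^ 2 := cube_le
    _ = (n : ℝ≥0∞) ^ 2 * (n.totient * abundancy n ^ 2) := by ring

end Abundancy

/-- The weight `(σ(n)/n)^k / n`. Up to constants, summing one variable out of an `lcm` sends the
family of these weights to itself, raising the exponent `k`. -/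
noncomputable def abundancyWeight (k n : ℕ) : ℝ≥0∞ := abundancy n ^ k * (n : ℝ≥0∞)⁻¹

section AbundancyWeight

variable (k : ℕ)

theorem abundancyWeight_mul_le (m n : ℕ) :
    abundancyWeight k (m * n) ≤ abundancyWeight k m * abundancyWeight k n := by
  calc abundancyWeight k (m * n)
    _ ≤ (abundancy m * abundancy n) ^ k * ((m * n : ℕ) : ℝ≥0∞)⁻¹ := by
      rw [abundancyWeight]
      gcongr
      exact abundancy_mul_le m n
    _ = abundancyWeight k m * abundancyWeight k n := by
      rw [Nat.cast_mul, ENNReal.mul_inv (by simp) (by simp), abundancyWeight, abundancyWeight]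
      ring

theorem inv_mul_abundancyWeight_mul_le (m n : ℕ) :
    ((m * n : ℕ) : ℝ≥0∞)⁻¹ * abundancyWeight k (m * n) ≤
      (m : ℝ≥0∞)⁻¹ * abundancyWeight k m * ((n : ℝ≥0∞)⁻¹ * abundancyWeight k n) := by
  rw [Nat.cast_mul, ENNReal.mul_inv (by simp) (by simp), mul_mul_mul_comm]
  gcongr
  exact abundancyWeight_mul_le k m n

theorem abundancyWeight_lcm_le {m : ℕ} (hm : m ≠ 0) (n : ℕ) :
    abundancyWeight k (m.lcm n) ≤ m.gcd n * (abundancyWeight k m * abundancyWeight k n) := by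
  calc abundancyWeight k (m.lcm n)
    _ ≤ (abundancy m * abundancy n) ^ k * (m.lcm n : ℝ≥0∞)⁻¹ := by
      rw [abundancyWeight]
      gcongr
      exact abundancy_lcm_le m n
    _ = m.gcd n * (abundancyWeight k m * abundancyWeight k n) := by
      rw [inv_lcm_eq_gcd_mul hm, abundancyWeight, abundancyWeight]
      ring

theorem sum_divisors_abundancyWeight_le (m : ℕ) :
    ∑ d ∈ m.divisors, abundancyWeight k d ≤ abundancy m ^ (k + 1) := by
  rw [pow_succ, abundancy.eq_def m, Finset.mul_sum]
  refine Finset.sum_le_sum fun d hd => ?_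
  rw [abundancyWeight]
  gcongr
  exact abundancy_le_of_dvd (Nat.mem_divisors.1 hd).2 (Nat.dvd_of_mem_divisors hd)

theorem inv_totient_le_abundancyWeight_two {n : ℕ} (hn : n ≠ 0) :
    (n.totient : ℝ≥0∞)⁻¹ ≤ abundancyWeight 2 n := by
  rw [abundancyWeight, ← div_eq_mul_inv, ENNReal.le_div_iff_mul_le (by simp [hn]) (by simp),
    mul_comm, ← div_eq_mul_inv]
  exact ENNReal.div_le_of_le_mul' (le_totient_mul_abundancy_sq n)

end AbundancyWeight

/-- The tail `∑_{n > x} f(n)` over positive integers `n`. -/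
noncomputable def tailSum (f : ℕ → ℝ≥0∞) (x : ℝ≥0∞) : ℝ≥0∞ :=
  ∑' n : ℕ+, if x < (n : ℕ) then f n else 0

/-- The tails of `f` satisfy `∑_{n > x} f(n) ≤ C/x` with a finite constant `C`. Allowing every
`x : ℝ≥0∞` costs nothing, as `C/0 = ⊤` for `C ≠ 0`, and makes the substitution `x ↦ x/d` free of
side conditions. -/
def HasInvTail (f : ℕ → ℝ≥0∞) : Prop :=
  ∃ C : ℝ≥0∞, C ≠ ⊤ ∧ ∀ x, tailSum f x ≤ C / x

section Tails

theorem HasInvTail.tsum_ne_top {f : ℕ → ℝ≥0∞} (hf : HasInvTail f) : ∑' n : ℕ+, f n ≠ ⊤ := by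
  obtain ⟨C, hC, tail_le⟩ := hf
  have half_lt (n : ℕ+) : (2⁻¹ : ℝ≥0∞) < (n : ℕ) :=
    ENNReal.one_half_lt_one.trans_le (by exact_mod_cast n.pos)
  have tsum_le := tail_le 2⁻¹
  simp only [tailSum, half_lt, if_true] at tsum_le
  exact ne_top_of_le_ne_top (ENNReal.div_ne_top hC (by simp)) tsum_le

theorem tsum_ite_lt_mul_le {f : ℕ → ℝ≥0∞} (hf : ∀ a b, f (a * b) ≤ f a * f b) (d : ℕ+)
    (x : ℝ≥0∞) :
    ∑' j : ℕ+, (if x < (d * j : ℕ) then f (d * j) else 0) ≤ f d * tailSum f (x / (d : ℕ)) := by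
  rw [tailSum, ← ENNReal.tsum_mul_left]
  refine ENNReal.tsum_le_tsum fun j => ?_
  have lt_mul_iff : x < (d * j : ℕ) ↔ x / (d : ℕ) < (j : ℕ) := by
    rw [ENNReal.div_lt_iff (by simp) (by simp), Nat.cast_mul, mul_comm]
  simp only [lt_mul_iff, mul_ite, mul_zero]
  split_ifs
  · exact hf d j
  · exact le_rfl

theorem HasInvTail.abundancy_mul {f : ℕ → ℝ≥0∞} (hf : ∀ a b, f (a * b) ≤ f a * f b)
    (tail : HasInvTail f) : HasInvTail fun n => abundancy n * f n := by
  have tsum_ne_top := tail.tsum_ne_top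
  obtain ⟨C, hC, tail_le⟩ := tail
  refine ⟨(∑' n : ℕ+, f n) * C, ENNReal.mul_ne_top tsum_ne_top hC, fun x => ?_⟩
  calc tailSum (fun n => abundancy n * f n) x
    _ = ∑' n : ℕ+, ∑ d ∈ (n : ℕ).divisors, (d : ℝ≥0∞)⁻¹ * if x < (n : ℕ) then f n else 0 := by
      simp_rw [tailSum, abundancy, ← Finset.sum_mul, mul_ite, mul_zero]
    _ = ∑' d : ℕ+, (d : ℝ≥0∞)⁻¹ * ∑' j : ℕ+, if x < (d * j : ℕ) then f (d * j) else 0 := by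
      simp_rw [← ENNReal.tsum_mul_left]
      exact tsum_sum_divisors fun d n => (d : ℝ≥0∞)⁻¹ * if x < n then f n else 0
    _ ≤ ∑' d : ℕ+, (d : ℝ≥0∞)⁻¹ * (f d * (C / (x / (d : ℕ)))) := by
      gcongr with d
      exact (tsum_ite_lt_mul_le hf d x).trans (by gcongr; exact tail_le _)
    _ = ∑' d : ℕ+, f d * (C / x) := by
      refine tsum_congr fun d => ?_
      rw [div_eq_mul_inv C, ENNReal.inv_div (by simp) (by simp)]
      calc (d : ℝ≥0∞)⁻¹ * (f d * (C * ((d : ℕ) / x)))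
        _ = (d : ℝ≥0∞)⁻¹ * d * (f d * (C / x)) := by simp only [div_eq_mul_inv]; ring
        _ = f d * (C / x) := by rw [ENNReal.inv_mul_cancel (by simp) (by simp), one_mul]
    _ = (∑' n : ℕ+, f n) * C / x := by rw [ENNReal.tsum_mul_right, mul_div_assoc]

theorem sum_range_ite_lt_inv_sq_le {x : ℝ} (hx : 0 < x) (M : ℕ) :
    ∑ n ∈ Finset.range M, (if x < n then ((n : ℝ) ^ 2)⁻¹ else 0) ≤ 2 / x := by
  calc ∑ n ∈ Finset.range M, (if x < n then ((n : ℝ) ^ 2)⁻¹ else 0)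
    _ = ∑ n ∈ Finset.Ioo ⌊x⌋₊ M, ((n : ℝ) ^ 2)⁻¹ := by
      rw [← Finset.sum_filter]
      congr 1
      ext n
      simp [Nat.floor_lt hx.le, and_comm]
    _ ≤ 2 / (⌊x⌋₊ + 1) := sum_Ioo_inv_sq_le _ _
    _ ≤ 2 / x := by
      gcongr
      exact (Nat.lt_floor_add_one x).le

theorem tailSum_inv_sq_le (x : ℝ≥0∞) : tailSum (fun n => ((n : ℝ≥0∞) ^ 2)⁻¹) x ≤ 2 / x := by
  rcases eq_or_ne x ⊤ with rfl | hx_top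
  · simp [tailSum]
  lift x to ℝ≥0 using hx_top
  rcases eq_zero_or_pos x with rfl | hx
  · simp [ENNReal.div_zero]
  have term_eq (n : ℕ) : (if (x : ℝ≥0∞) < n then ((n : ℝ≥0∞) ^ 2)⁻¹ else 0) =
      ENNReal.ofReal (if (x : ℝ) < n then ((n : ℝ) ^ 2)⁻¹ else 0) := by
    have lt_iff : (x : ℝ≥0∞) < n ↔ (x : ℝ) < n := by norm_cast
    simp only [lt_iff]
    split_ifs with hn
    · have n_pos : (0 : ℝ) < n := x.coe_nonneg.trans_lt hn
      rw [ENNReal.ofReal_inv_of_pos (by positivity), ENNReal.ofReal_pow n_pos.le,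
        ENNReal.ofReal_natCast]
    · rw [ENNReal.ofReal_zero]
  calc tailSum (fun n => ((n : ℝ≥0∞) ^ 2)⁻¹) x
    _ ≤ ∑' n : ℕ, if (x : ℝ≥0∞) < n then ((n : ℝ≥0∞) ^ 2)⁻¹ else 0 :=
      ENNReal.tsum_comp_le_tsum_of_injective PNat.coe_injective _
    _ ≤ ENNReal.ofReal (2 / x) := ENNReal.tsum_le_of_sum_range_le fun M => by
      simp_rw [term_eq]
      rw [← ENNReal.ofReal_sum_of_nonneg fun n _ => by positivity]
      exact ENNReal.ofReal_le_ofReal (sum_range_ite_lt_inv_sq_le hx M)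
    _ = 2 / x := by
      rw [ENNReal.ofReal_div_of_pos (NNReal.coe_pos.2 hx), ENNReal.ofReal_coe_nnreal,
        ENNReal.ofReal_ofNat]

theorem hasInvTail_inv_mul_abundancyWeight (k : ℕ) :
    HasInvTail fun n => (n : ℝ≥0∞)⁻¹ * abundancyWeight k n := by
  induction k with
  | zero =>
    refine ⟨2, by simp, fun x => ?_⟩
    simpa only [abundancyWeight, pow_zero, one_mul, ENNReal.inv_pow, ← sq] using tailSum_inv_sq_le x
  | succ k ih =>
    simpa only [abundancyWeight, pow_succ', mul_assoc, mul_left_comm] using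
      ih.abundancy_mul (inv_mul_abundancyWeight_mul_le k)

end Tails

section LcmSums

theorem tsum_inv_mul_abundancyWeight_lcm_le (k : ℕ) {m : ℕ} (hm : m ≠ 0) :
    ∑' n : ℕ+, (n : ℝ≥0∞)⁻¹ * abundancyWeight k (m.lcm n) ≤
      (∑' n : ℕ+, (n : ℝ≥0∞)⁻¹ * abundancyWeight k n) * abundancyWeight (2 * k + 1) m := by
  set S := ∑' n : ℕ+, (n : ℝ≥0∞)⁻¹ * abundancyWeight k n
  calc ∑' n : ℕ+, (n : ℝ≥0∞)⁻¹ * abundancyWeight k (m.lcm n)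
    _ ≤ ∑' n : ℕ+, (n : ℝ≥0∞)⁻¹ * (m.gcd n * (abundancyWeight k m * abundancyWeight k n)) := by
      gcongr with n
      exact abundancyWeight_lcm_le k hm n
    _ = abundancyWeight k m * ∑' n : ℕ+, m.gcd n * ((n : ℝ≥0∞)⁻¹ * abundancyWeight k n) := by
      rw [← ENNReal.tsum_mul_left]
      exact tsum_congr fun n => by ring
    _ ≤ abundancyWeight k m *
          ((∑ d ∈ m.divisors, d * ((d : ℝ≥0∞)⁻¹ * abundancyWeight k d)) * S) := by
      gcongr
      exact tsum_gcd_mul_le (inv_mul_abundancyWeight_mul_le k) hm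
    _ = abundancyWeight k m * ((∑ d ∈ m.divisors, abundancyWeight k d) * S) := by
      congr! 3 with d hd
      have hd_ne_zero : d ≠ 0 := (Nat.pos_of_mem_divisors hd).ne'
      rw [← mul_assoc, ENNReal.mul_inv_cancel (by simpa) (by simp), one_mul]
    _ ≤ abundancyWeight k m * (abundancy m ^ (k + 1) * S) := by
      gcongr
      exact sum_divisors_abundancyWeight_le k m
    _ = S * abundancyWeight (2 * k + 1) m := by
      rw [abundancyWeight, abundancyWeight]
      ring

theorem lcm_univ_fin_succ {α : Type*} [CommMonoidWithZero α] [NormalizedGCDMonoid α] {r : ℕ}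
    (f : Fin (r + 1) → α) :
    Finset.univ.lcm f = lcm (f 0) (Finset.univ.lcm fun i : Fin r => f i.succ) := by
  rw [Fin.univ_succ, Finset.cons_eq_insert, Finset.lcm_insert, Finset.map_eq_image,
    Finset.lcm_image]
  rfl

theorem lcm_univ_coe_pnat_ne_zero {ι : Type*} [Fintype ι] (N : ι → ℕ+) :
    (Finset.univ.lcm fun i => (N i : ℕ)) ≠ 0 := by
  simp [Finset.lcm_eq_zero_iff]

theorem tsum_fin_succ_eq {α : Type*} {r : ℕ} (f : (Fin (r + 1) → α) → ℝ≥0∞) :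
    ∑' N, f N = ∑' (n : α) (N : Fin r → α), f (Fin.cons n N) := by
  rw [← (Fin.consEquiv fun _ => α).tsum_eq, ← ENNReal.tsum_prod]
  rfl

theorem exists_tsum_prod_inv_mul_abundancyWeight_lcm_le (r k : ℕ) :
    ∃ C : ℝ≥0∞, C ≠ ⊤ ∧ ∃ K : ℕ, ∀ m : ℕ, m ≠ 0 →
      ∑' N : Fin r → ℕ+, (∏ i, (N i : ℝ≥0∞)⁻¹) *
        abundancyWeight k (m.lcm (Finset.univ.lcm fun i => (N i : ℕ))) ≤
      C * abundancyWeight K m := by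
  induction r with
  | zero => exact ⟨1, by simp, k, fun m _ => by simp⟩
  | succ r ih =>
    obtain ⟨C, hC, K, le_weight⟩ := ih
    set S := ∑' n : ℕ+, (n : ℝ≥0∞)⁻¹ * abundancyWeight K n
    have hS : S ≠ ⊤ := (hasInvTail_inv_mul_abundancyWeight K).tsum_ne_top
    refine ⟨C * S, ENNReal.mul_ne_top hC hS, 2 * K + 1, fun m hm => ?_⟩
    simp only [tsum_fin_succ_eq, lcm_univ_fin_succ, lcm_eq_nat_lcm, ← Nat.lcm_assoc,
      Fin.prod_univ_succ, Fin.cons_zero, Fin.cons_succ, mul_assoc, ENNReal.tsum_mul_left]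
    calc ∑' n : ℕ+, (n : ℝ≥0∞)⁻¹ * ∑' N : Fin r → ℕ+, (∏ i, (N i : ℝ≥0∞)⁻¹) *
          abundancyWeight k ((m.lcm n).lcm (Finset.univ.lcm fun i => (N i : ℕ)))
      _ ≤ ∑' n : ℕ+, (n : ℝ≥0∞)⁻¹ * (C * abundancyWeight K (m.lcm n)) := by
        gcongr with n
        exact le_weight (m.lcm n) (Nat.lcm_ne_zero hm n.ne_zero)
      _ = C * ∑' n : ℕ+, (n : ℝ≥0∞)⁻¹ * abundancyWeight K (m.lcm n) := by
        simp_rw [mul_left_comm _ C, ENNReal.tsum_mul_left]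
      _ ≤ C * (S * abundancyWeight (2 * K + 1) m) := by
        gcongr
        exact tsum_inv_mul_abundancyWeight_lcm_le K hm

end LcmSums

section EulerTerm

theorem eulerTerm_nonneg {r : ℕ} (N : Fin r → ℕ+) : 0 ≤ eulerTerm r N := by
  rw [eulerTerm]
  positivity

theorem ofReal_eulerTerm_le {r : ℕ} (N : Fin r → ℕ+) :
    ENNReal.ofReal (eulerTerm r N) ≤
      (∏ i, (N i : ℝ≥0∞)⁻¹) * abundancyWeight 2 (Finset.univ.lcm fun i => (N i : ℕ)) := by
  have lcm_ne_zero := lcm_univ_coe_pnat_ne_zero N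
  set L := Finset.univ.lcm fun i => (N i : ℕ)
  have totient_pos : (0 : ℝ) < L.totient := by
    exact_mod_cast Nat.totient_pos.2 (Nat.pos_of_ne_zero lcm_ne_zero)
  have coe_pos (i : Fin r) : (0 : ℝ) < (N i : ℕ) := by exact_mod_cast (N i).pos
  calc ENNReal.ofReal (eulerTerm r N)
    _ = ENNReal.ofReal ((∏ i, ((N i : ℕ) : ℝ)⁻¹) * (L.totient : ℝ)⁻¹) := by
      rw [eulerTerm, one_div, mul_inv_rev, Finset.prod_inv_distrib]
    _ = (∏ i, (N i : ℝ≥0∞)⁻¹) * (L.totient : ℝ≥0∞)⁻¹ := by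
      rw [ENNReal.ofReal_mul (by positivity),
        ENNReal.ofReal_prod_of_nonneg fun i _ => (inv_pos.2 (coe_pos i)).le]
      simp only [ENNReal.ofReal_inv_of_pos, totient_pos, coe_pos, ENNReal.ofReal_natCast]
    _ ≤ (∏ i, (N i : ℝ≥0∞)⁻¹) * abundancyWeight 2 L := by
      gcongr
      exact inv_totient_le_abundancyWeight_two lcm_ne_zero

theorem exists_tsum_ite_lt_eulerTerm_le (r : ℕ) :
    ∃ C : ℝ≥0∞, C ≠ ⊤ ∧ ∀ x : ℝ≥0∞,
      ∑' N : Fin (r + 1) → ℕ+,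
        (if x < (N 0 : ℕ) then ENNReal.ofReal (eulerTerm (r + 1) N) else 0) ≤ C / x := by
  obtain ⟨C, hC, K, le_weight⟩ := exists_tsum_prod_inv_mul_abundancyWeight_lcm_le r 2
  obtain ⟨D, hD, tail_le⟩ := hasInvTail_inv_mul_abundancyWeight K
  refine ⟨C * D, ENNReal.mul_ne_top hC hD, fun x => ?_⟩
  have sum_tail_le (n : ℕ+) :
      ∑' N : Fin r → ℕ+, ENNReal.ofReal (eulerTerm (r + 1) (Fin.cons n N)) ≤
        C * ((n : ℝ≥0∞)⁻¹ * abundancyWeight K n) := by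
    rw [mul_left_comm]
    refine (ENNReal.tsum_le_tsum fun N => ofReal_eulerTerm_le _).trans ?_
    simp only [lcm_univ_fin_succ, lcm_eq_nat_lcm, Fin.prod_univ_succ, Fin.cons_zero, Fin.cons_succ,
      mul_assoc, ENNReal.tsum_mul_left]
    gcongr
    exact le_weight n n.ne_zero
  calc ∑' N : Fin (r + 1) → ℕ+,
        (if x < (N 0 : ℕ) then ENNReal.ofReal (eulerTerm (r + 1) N) else 0)
    _ = ∑' n : ℕ+, if x < (n : ℕ) then
          ∑' N : Fin r → ℕ+, ENNReal.ofReal (eulerTerm (r + 1) (Fin.cons n N)) else 0 := by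
      rw [tsum_fin_succ_eq]
      refine tsum_congr fun n => ?_
      split_ifs with hn <;> simp [hn]
    _ ≤ ∑' n : ℕ+, C * if x < (n : ℕ) then (n : ℝ≥0∞)⁻¹ * abundancyWeight K n else 0 := by
      refine ENNReal.tsum_le_tsum fun n => ?_
      split_ifs
      · exact sum_tail_le n
      · simp
    _ ≤ C * (D / x) := by
      rw [ENNReal.tsum_mul_left]
      gcongr
      exact tail_le x
    _ = C * D / x := (mul_div_assoc _ _ _).symm

end EulerTerm

theorem summable_and_tsum_le_of_tsum_ofReal_le {ι : Type*} {f : ι → ℝ} (hf : ∀ i, 0 ≤ f i) {B : ℝ}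
    (hB : 0 ≤ B) (h : ∑' i, ENNReal.ofReal (f i) ≤ ENNReal.ofReal B) :
    Summable f ∧ ∑' i, f i ≤ B := by
  have sum_le (s : Finset ι) : ∑ i ∈ s, f i ≤ B := by
    rw [← ENNReal.ofReal_le_ofReal_iff hB, ENNReal.ofReal_sum_of_nonneg fun i _ => hf i]
    exact (ENNReal.sum_le_tsum s).trans h
  exact ⟨summable_of_sum_le hf sum_le, Real.tsum_le_of_sum_le hf sum_le⟩

/-- Fix `r ≥ 1`. There is a constant `C > 0` such that for every real
`x ≥ 1`, the family `1/(φ([n_1,…,n_r])·n_1⋯n_r)` over multi-indices with `n_1 > x`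
is summable with sum at most `C/x`. -/
theorem tail_sum_totient_lcm_bigO (r : ℕ) (hr : 1 ≤ r) :
    ∃ C : ℝ, 0 < C ∧ ∀ x : ℝ, 1 ≤ x →
      Summable (fun N : {N : Fin r → ℕ+ // x < ((N ⟨0, hr⟩ : ℕ) : ℝ)} => eulerTerm r N.1) ∧
      ∑' N : {N : Fin r → ℕ+ // x < ((N ⟨0, hr⟩ : ℕ) : ℝ)}, eulerTerm r N.1 ≤ C / x := by
  obtain ⟨s, rfl⟩ := Nat.exists_eq_add_one.2 hr
  obtain ⟨C, hC, tail_le⟩ := exists_tsum_ite_lt_eulerTerm_le s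
  refine ⟨C.toReal + 1, by positivity, fun x hx => ?_⟩
  have x_pos : 0 < x := by linarith
  refine summable_and_tsum_le_of_tsum_ofReal_le (fun _ => eulerTerm_nonneg _) (by positivity) ?_
  calc ∑' N : {N : Fin (s + 1) → ℕ+ // x < (N 0 : ℕ)}, ENNReal.ofReal (eulerTerm (s + 1) N.1)
    _ = ∑' N : Fin (s + 1) → ℕ+,
          if ENNReal.ofReal x < (N 0 : ℕ) then ENNReal.ofReal (eulerTerm (s + 1) N) else 0 := by
      simp only [ENNReal.ofReal_lt_natCast (PNat.ne_zero _)]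
      exact tsum_subtype {N : Fin (s + 1) → ℕ+ | x < (N 0 : ℕ)} fun N =>
        ENNReal.ofReal (eulerTerm (s + 1) N)
    _ ≤ C / ENNReal.ofReal x := tail_le _
    _ = ENNReal.ofReal (C.toReal / x) := by
      rw [ENNReal.ofReal_div_of_pos x_pos, ENNReal.ofReal_toReal hC]
    _ ≤ ENNReal.ofReal ((C.toReal + 1) / x) := by
      gcongr
      exact le_add_of_nonneg_right zero_le_one
end

section
/- For every ε > 0 there exists a constant C > 0 such that for every positive integer z and every real number x ≥ 1, the finite sum over positive integers n ≤ x of gcd(n,z)·n/φ(n) is at most C·x·z^ε. -/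
open scoped BigOperators

/-!
Write `S = ∑ 1 / (n φ(n))`, which converges because `n / φ(n) ≤ τ(n) ≪ √n`. Since
`n = ∑_{e ∣ n} φ(n / e)` and `φ(n / e) φ(e) ≤ φ(n)`, one has `n / φ(n) ≤ ∑_{e ∣ n} 1 / φ(e)`, and
interchanging sums gives `∑_{n ≤ N} n / φ(n) ≤ S N`. Expanding `gcd(n, z) = ∑_{d ∣ n, d ∣ z} φ(d)`
and writing `n = d m`, the inequality `φ(d) φ(m) ≤ φ(d m)` makes the weight `φ(d)` cancel, so each
`d ∣ z` contributes at most `d ∑_{m ≤ N / d} m / φ(m) ≤ S N`. The gcd sum is therefore at most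
`S N τ(z)`, and the divisor bound `τ(z) ≪ z ^ ε` finishes the proof. The latter holds because a
prime power `p ^ k` satisfies `τ(p ^ k) = k + 1 ≤ c_p p ^ (k ε)` with `c_p = 1` unless `p ^ ε < 2`.
-/

open Finset

section MultiplesUpTo

variable {M : Type*} [AddCommMonoid M]

lemma sum_Icc_filter_dvd {d : ℕ} (hd : 0 < d) (N : ℕ) (f : ℕ → M) :
    ∑ n ∈ Icc 1 N with d ∣ n, f n = ∑ m ∈ Icc 1 (N / d), f (d * m) := by
  have himage : {n ∈ Icc 1 N | d ∣ n} = (Icc 1 (N / d)).image (d * ·) := by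
    ext n
    simp only [mem_filter, mem_image, mem_Icc, Nat.le_div_iff_mul_le hd, mul_comm _ d]
    constructor
    · rintro ⟨⟨hpos, hle⟩, m, rfl⟩
      exact ⟨m, ⟨Nat.pos_of_mul_pos_left hpos, hle⟩, rfl⟩
    · rintro ⟨m, ⟨hpos, hle⟩, rfl⟩
      exact ⟨⟨Nat.mul_pos hd hpos, hle⟩, dvd_mul_right d m⟩
  rw [himage, sum_image (mul_right_injective₀ hd.ne').injOn]

lemma sum_Icc_sum_divisors_gcd {z : ℕ} (hz : z ≠ 0) (N : ℕ) (f : ℕ → ℕ → M) :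
    ∑ n ∈ Icc 1 N, ∑ d ∈ (n.gcd z).divisors, f d n =
      ∑ d ∈ z.divisors, ∑ m ∈ Icc 1 (N / d), f d (d * m) := by
  calc ∑ n ∈ Icc 1 N, ∑ d ∈ (n.gcd z).divisors, f d n
      = ∑ d ∈ z.divisors, ∑ n ∈ Icc 1 N with d ∣ n, f d n := by
        refine sum_comm' fun n d => ?_
        simp only [Nat.mem_divisors, Nat.dvd_gcd_iff, mem_filter, ne_eq, Nat.gcd_eq_zero_iff, hz,
          and_false, not_false_eq_true, and_true, and_assoc]
    _ = ∑ d ∈ z.divisors, ∑ m ∈ Icc 1 (N / d), f d (d * m) :=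
        sum_congr rfl fun d hd => sum_Icc_filter_dvd (Nat.pos_of_mem_divisors hd) N (f d)

end MultiplesUpTo

lemma add_one_le_max_mul_pow {K : Type*} [Field K] [LinearOrder K] [IsStrictOrderedRing K]
    {a : K} (ha : 1 < a) (k : ℕ) :
    (k : K) + 1 ≤ max 1 (1 / (a - 1)) * a ^ k := by
  set c := max 1 (1 / (a - 1))
  have hc : 1 ≤ c := le_max_left _ _
  have hca : 1 ≤ c * (a - 1) := (div_le_iff₀ (sub_pos.2 ha)).1 (le_max_right _ _)
  have bernoulli : 1 + k * (a - 1) ≤ a ^ k := one_add_mul_sub_le_pow (by linarith) k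
  calc (k : K) + 1 ≤ k * (c * (a - 1)) + c := by
        gcongr
        exact le_mul_of_one_le_right k.cast_nonneg hca
    _ = c * (1 + k * (a - 1)) := by ring
    _ ≤ c * a ^ k := by gcongr

lemma exists_forall_prod_max_one_div_rpow_sub_one_le {ε : ℝ} (hε : 0 < ε) :
    ∃ C : ℝ, 0 < C ∧ ∀ s : Finset ℕ, ∏ p ∈ s, max 1 (1 / ((p : ℝ) ^ ε - 1)) ≤ C := by
  set c : ℕ → ℝ := fun p => max 1 (1 / ((p : ℝ) ^ ε - 1))
  have one_le_c (p : ℕ) : 1 ≤ c p := le_max_left _ _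
  set P := ⌈(2 : ℝ) ^ ε⁻¹⌉₊
  have c_eq_one {p : ℕ} (hp : P ≤ p) : c p = 1 := by
    have two_le : 2 ≤ (p : ℝ) ^ ε :=
      (Real.rpow_inv_le_iff_of_pos zero_le_two p.cast_nonneg hε).1 (Nat.ceil_le.1 hp)
    refine max_eq_left ((div_le_one ?_).2 ?_) <;> linarith
  refine ⟨∏ p ∈ range P, c p,
    prod_pos fun p _ => zero_lt_one.trans_le (one_le_c p), fun s => ?_⟩
  calc ∏ p ∈ s, c p = ∏ p ∈ s with p < P, c p :=
        (prod_filter_of_ne fun p _ hp => lt_of_not_ge fun hle => hp (c_eq_one hle)).symm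
    _ ≤ ∏ p ∈ range P, c p := by
        refine prod_le_prod_of_subset_of_one_le (fun p hp => ?_)
          (fun p _ => zero_le_one.trans (one_le_c p)) (fun p _ _ => one_le_c p)
        exact mem_range.2 (mem_filter.1 hp).2

theorem exists_card_divisors_le_mul_rpow {ε : ℝ} (hε : 0 < ε) :
    ∃ C : ℝ, 0 < C ∧ ∀ n : ℕ, n ≠ 0 → (#n.divisors : ℝ) ≤ C * (n : ℝ) ^ ε := by
  obtain ⟨C, hC, prod_le⟩ := exists_forall_prod_max_one_div_rpow_sub_one_le hε
  refine ⟨C, hC, fun n hn => ?_⟩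
  have prod_prime_powers :
      ∏ p ∈ n.primeFactors, ((p : ℝ) ^ ε) ^ n.factorization p = (n : ℝ) ^ ε := by
    simp_rw [Real.rpow_pow_comm (Nat.cast_nonneg _)]
    rw [Real.finsetProd_rpow _ _ fun p _ => by positivity]
    exact_mod_cast congrArg (fun m : ℕ => (m : ℝ) ^ ε)
      (Nat.prod_primeFactors_pow_factorization hn).symm
  calc (#n.divisors : ℝ) = ∏ p ∈ n.primeFactors, ((n.factorization p : ℝ) + 1) := by
        rw [Nat.card_divisors hn]
        push_cast
        rfl
    _ ≤ ∏ p ∈ n.primeFactors,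
          max 1 (1 / ((p : ℝ) ^ ε - 1)) * ((p : ℝ) ^ ε) ^ n.factorization p := by
        refine prod_le_prod (fun p _ => by positivity) fun p hp => ?_
        have one_lt_p : (1 : ℝ) < p := by
          exact_mod_cast (Nat.prime_of_mem_primeFactors hp).one_lt
        exact add_one_le_max_mul_pow (Real.one_lt_rpow one_lt_p hε) _
    _ = (∏ p ∈ n.primeFactors, max 1 (1 / ((p : ℝ) ^ ε - 1))) * (n : ℝ) ^ ε := by
        rw [prod_mul_distrib, prod_prime_powers]
    _ ≤ C * (n : ℝ) ^ ε := by
        gcongr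
        exact prod_le _

lemma div_totient_le_card_divisors (n : ℕ) : (n : ℝ) / n.totient ≤ #n.divisors := by
  refine div_le_of_le_mul₀ (Nat.cast_nonneg _) (Nat.cast_nonneg _) ?_
  have self_le : n ≤ #n.divisors * n.totient := by
    rcases n.eq_zero_or_pos with rfl | hn
    · simp
    calc n = ∑ d ∈ n.divisors, d.totient := n.sum_totient.symm
      _ ≤ #n.divisors • n.totient := sum_le_card_nsmul _ _ _ fun d hd =>
          Nat.le_of_dvd (Nat.totient_pos.2 hn)
            (Nat.totient_dvd_of_dvd (Nat.dvd_of_mem_divisors hd))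
  exact_mod_cast self_le

lemma totient_mul_div_totient_mul_le (d m : ℕ) :
    (d.totient : ℝ) * ((d * m : ℕ) / (d * m).totient) ≤ d * (m / m.totient) := by
  rcases d.eq_zero_or_pos with rfl | hd
  · simp
  rcases m.eq_zero_or_pos with rfl | hm
  · simp
  have totient_d_pos : (0 : ℝ) < d.totient := by exact_mod_cast Nat.totient_pos.2 hd
  have totient_m_pos : (0 : ℝ) < m.totient := by exact_mod_cast Nat.totient_pos.2 hm
  have super_mul : (d.totient : ℝ) * m.totient ≤ (d * m).totient := by
    exact_mod_cast Nat.totient_super_multiplicative d m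
  calc (d.totient : ℝ) * ((d * m : ℕ) / (d * m).totient)
      ≤ d.totient * ((d * m : ℕ) / (d.totient * m.totient)) := by
        exact mul_le_mul_of_nonneg_left (div_le_div_of_nonneg_left (Nat.cast_nonneg _)
          (mul_pos totient_d_pos totient_m_pos) super_mul) totient_d_pos.le
    _ = d * (m / m.totient) := by
        push_cast
        field_simp

lemma div_totient_le_sum_one_div_totient (n : ℕ) :
    (n : ℝ) / n.totient ≤ ∑ e ∈ n.divisors, 1 / (e.totient : ℝ) := by
  refine div_le_of_le_mul₀ (Nat.cast_nonneg _) (sum_nonneg fun _ _ => by positivity) ?_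
  calc (n : ℝ) = ∑ e ∈ n.divisors, ((n / e).totient : ℝ) := by
        rw [← Nat.cast_sum, Nat.sum_div_divisors n Nat.totient, Nat.sum_totient]
    _ ≤ ∑ e ∈ n.divisors, 1 / (e.totient : ℝ) * n.totient := by
        refine sum_le_sum fun e he => ?_
        have totient_e_pos : (0 : ℝ) < e.totient := by
          exact_mod_cast Nat.totient_pos.2 (Nat.pos_of_mem_divisors he)
        have super_mul := Nat.totient_super_multiplicative (n / e) e
        rw [Nat.div_mul_cancel (Nat.dvd_of_mem_divisors he)] at super_mul
        rw [one_div_mul_eq_div, le_div_iff₀ totient_e_pos]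
        exact_mod_cast super_mul
    _ = (∑ e ∈ n.divisors, 1 / (e.totient : ℝ)) * n.totient := (sum_mul _ _ _).symm

lemma summable_one_div_mul_totient : Summable fun n : ℕ => 1 / ((n : ℝ) * n.totient) := by
  obtain ⟨A, -, card_le⟩ := exists_card_divisors_le_mul_rpow (ε := 1 / 2) (by norm_num)
  have summable_majorant : Summable fun n : ℕ => A * (1 / (n : ℝ) ^ (3 / 2 : ℝ)) :=
    (Real.summable_one_div_nat_rpow.2 (by norm_num)).mul_left A
  refine summable_majorant.of_nonneg_of_le (fun n => by positivity) fun n => ?_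
  rcases n.eq_zero_or_pos with rfl | hn
  · simp
  have n_pos : (0 : ℝ) < n := by exact_mod_cast hn
  have rpow_split : (n : ℝ) ^ 2 = n ^ (3 / 2 : ℝ) * n ^ (1 / 2 : ℝ) := by
    rw [← Real.rpow_add n_pos, ← Real.rpow_two]
    norm_num
  calc 1 / ((n : ℝ) * n.totient) = n / n.totient / n ^ 2 := by field_simp
    _ ≤ A * n ^ (1 / 2 : ℝ) / n ^ 2 := by
        gcongr
        exact (div_totient_le_card_divisors n).trans (card_le n hn.ne')
    _ = A * (1 / (n : ℝ) ^ (3 / 2 : ℝ)) := by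
        rw [rpow_split]
        field_simp

lemma tsum_one_div_mul_totient_pos : 0 < ∑' n : ℕ, 1 / ((n : ℝ) * n.totient) :=
  summable_one_div_mul_totient.tsum_pos (fun n => by positivity) 1 (by simp)

theorem sum_div_totient_le (N : ℕ) :
    ∑ n ∈ Icc 1 N, (n : ℝ) / n.totient ≤ (∑' n : ℕ, 1 / ((n : ℝ) * n.totient)) * N := by
  calc ∑ n ∈ Icc 1 N, (n : ℝ) / n.totient
      ≤ ∑ n ∈ Icc 1 N, ∑ e ∈ n.divisors, 1 / (e.totient : ℝ) :=
        sum_le_sum fun n _ => div_totient_le_sum_one_div_totient n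
    _ = ∑ e ∈ Icc 1 N, 1 / (e.totient : ℝ) * (N / e : ℕ) := by
        let oneDivTotient : ArithmeticFunction ℝ := ⟨fun e => 1 / (e.totient : ℝ), by simp⟩
        simpa only [ArithmeticFunction.coe_mul_zeta_apply, ← Icc_add_one_left_eq_Ioc] using!
          ArithmeticFunction.sum_Ioc_mul_zeta_eq_sum oneDivTotient N
    _ ≤ ∑ e ∈ Icc 1 N, 1 / (e.totient : ℝ) * (N / e) := by
        gcongr
        exact Nat.cast_div_le
    _ = (∑ e ∈ Icc 1 N, 1 / ((e : ℝ) * e.totient)) * N := by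
        rw [sum_mul]
        exact sum_congr rfl fun e _ => by ring
    _ ≤ (∑' n : ℕ, 1 / ((n : ℝ) * n.totient)) * N := by
        gcongr
        exact summable_one_div_mul_totient.sum_le_tsum _ fun n _ => by positivity

theorem sum_gcd_mul_div_totient_le {z : ℕ} (hz : z ≠ 0) (N : ℕ) :
    ∑ n ∈ Icc 1 N, (n.gcd z : ℝ) * n / n.totient ≤
      (∑' n : ℕ, 1 / ((n : ℝ) * n.totient)) * N * #z.divisors := by
  set S := ∑' n : ℕ, 1 / ((n : ℝ) * n.totient)
  calc ∑ n ∈ Icc 1 N, (n.gcd z : ℝ) * n / n.totient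
      = ∑ n ∈ Icc 1 N, ∑ d ∈ (n.gcd z).divisors, (d.totient : ℝ) * (n / n.totient) := by
        refine sum_congr rfl fun n _ => ?_
        rw [← sum_mul, ← Nat.cast_sum, Nat.sum_totient, mul_div_assoc]
    _ = ∑ d ∈ z.divisors, ∑ m ∈ Icc 1 (N / d),
          (d.totient : ℝ) * ((d * m : ℕ) / (d * m).totient) :=
        sum_Icc_sum_divisors_gcd hz N fun d n => (d.totient : ℝ) * (n / n.totient)
    _ ≤ ∑ d ∈ z.divisors, ∑ m ∈ Icc 1 (N / d), (d : ℝ) * (m / m.totient) := by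
        exact sum_le_sum fun d _ => sum_le_sum fun m _ => totient_mul_div_totient_mul_le d m
    _ ≤ ∑ _d ∈ z.divisors, S * N := by
        refine sum_le_sum fun d hd => ?_
        have d_pos : (0 : ℝ) < d := by exact_mod_cast Nat.pos_of_mem_divisors hd
        calc ∑ m ∈ Icc 1 (N / d), (d : ℝ) * (m / m.totient)
            = d * ∑ m ∈ Icc 1 (N / d), (m : ℝ) / m.totient := (mul_sum _ _ _).symm
          _ ≤ d * (S * (N / d : ℕ)) := by
              gcongr
              exact sum_div_totient_le _
          _ ≤ d * (S * (N / d)) := by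
              gcongr
              exact Nat.cast_div_le
          _ = S * N := by field_simp
    _ = S * N * #z.divisors := by
        rw [sum_const, nsmul_eq_mul, mul_comm]

/-- For every `ε > 0` there is `C > 0` such that for every positive
integer `z` and every real `x ≥ 1`,
`∑_{n ≤ x} gcd(n,z)·n/φ(n) ≤ C·x·z^ε`. -/
theorem sum_gcd_mul_div_totient_bigO (ε : ℝ) (hε : 0 < ε) :
    ∃ C : ℝ, 0 < C ∧ ∀ z : ℕ, 0 < z → ∀ x : ℝ, 1 ≤ x →
      ∑ n ∈ Finset.Icc 1 ⌊x⌋₊, (Nat.gcd n z : ℝ) * n / (Nat.totient n : ℝ) ≤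
        C * x * (z : ℝ) ^ ε := by
  obtain ⟨A, hA, card_le⟩ := exists_card_divisors_le_mul_rpow hε
  have hS := tsum_one_div_mul_totient_pos
  set S := ∑' n : ℕ, 1 / ((n : ℝ) * n.totient)
  refine ⟨S * A, mul_pos hS hA, fun z hz x hx => ?_⟩
  calc ∑ n ∈ Icc 1 ⌊x⌋₊, (Nat.gcd n z : ℝ) * n / (Nat.totient n : ℝ)
      ≤ S * ⌊x⌋₊ * #z.divisors := sum_gcd_mul_div_totient_le hz.ne' _
    _ ≤ S * x * (A * (z : ℝ) ^ ε) := by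
        gcongr
        · exact Nat.floor_le (by linarith)
        · exact card_le z hz.ne'
    _ = S * A * x * (z : ℝ) ^ ε := by ring
end

section
/- Fix an integer r ≥ 1. There exists a constant C > 0 such that for every real number x ≥ 1, the family of terms n_1/(φ([n_1,…,n_r])·n_2⋯n_r), indexed by multi-indices N = (n_1,…,n_r) of positive integers with n_1 ≤ x, is summable and its sum is at most C·x. -/
open scoped BigOperators

/-- The general term `n_1/(φ([n_1,…,n_r])·n_2⋯n_r)` associated to a multi-index
`N = (n_1,…,n_r)` of positive integers (for `r ≥ 1`, the first index being `⟨0, hr⟩`). -/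
noncomputable def eulerTerm₂ (r : ℕ) (hr : 1 ≤ r) (N : Fin r → ℕ+) : ℝ :=
  ((N ⟨0, hr⟩ : ℕ) : ℝ) /
    ((Nat.totient (Finset.univ.lcm fun i => (N i : ℕ)) : ℝ) *
      ∏ i ∈ Finset.univ.erase ⟨0, hr⟩, ((N i : ℕ) : ℝ))

/-!
Fix `M = (n₂, …, n_r)` and put `m = [n₂, …, n_r]`. From `φ n * φ m ≤ φ [n, m] * (n, m)` the sum
over `n = n₁ ≤ x` of `n / φ [n, m]` is at most `(φ m)⁻¹ * ∑ n ≤ x, (n / φ n) * (n, m)`. Since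
`n / φ n` is submultiplicative and bounded on average, splitting according to the divisors of `m`
bounds this by a constant times `x * τ(m) ^ 3 / m`, where `τ` counts divisors. Finally `m ≥ nᵢ`
for each `i` gives `m ≥ (n₂ ⋯ n_r) ^ (1 / r)`, so the sum over `M` of `τ(m) ^ 3 / (m * n₂ ⋯ n_r)`
is dominated by a product of `r - 1` convergent series `∑ n, τ(n) ^ 3 / n ^ (1 + 1 / r)`.
-/

section

open Finset
open scoped Nat

lemma card_divisors_mul_le (a b : ℕ) :
    #(a * b).divisors ≤ #a.divisors * #b.divisors := by
  rw [Nat.divisors_mul]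
  exact card_mul_le

lemma card_divisors_lcm_le (a b : ℕ) :
    #(a.lcm b).divisors ≤ #a.divisors * #b.divisors := by
  rcases eq_or_ne (a * b) 0 with hab | hab
  · have : a.lcm b = 0 := Nat.lcm_eq_zero_iff.2 (mul_eq_zero.1 hab)
    simp [this]
  · exact (card_le_card (Nat.divisors_subset_of_dvd hab (Nat.lcm_dvd_mul a b))).trans
      (card_divisors_mul_le a b)

lemma card_divisors_finset_lcm_le {ι : Type*} (s : Finset ι) (f : ι → ℕ) :
    #(s.lcm f).divisors ≤ ∏ i ∈ s, #(f i).divisors := by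
  classical
  induction s using Finset.induction_on with
  | empty => simp
  | insert i s hi ih =>
    rw [lcm_insert, prod_insert hi]
    exact (card_divisors_lcm_le _ _).trans (Nat.mul_le_mul_left _ ih)

lemma prod_rpow_le_lcm {ι : Type*} {s : Finset ι} {f : ι → ℕ} (hf : ∀ i ∈ s, f i ≠ 0)
    {θ : ℝ} (hθ : 0 ≤ θ) (hθs : θ * #s ≤ 1) :
    ∏ i ∈ s, (f i : ℝ) ^ θ ≤ (s.lcm f : ℕ) := by
  have lcm_pos : 0 < s.lcm f := Nat.pos_of_ne_zero (lcm_ne_zero_iff.2 hf)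
  calc ∏ i ∈ s, (f i : ℝ) ^ θ
      ≤ ∏ _i ∈ s, ((s.lcm f : ℕ) : ℝ) ^ θ := by
        gcongr with i hi
        exact Nat.le_of_dvd lcm_pos (dvd_lcm hi)
    _ = ((s.lcm f : ℕ) : ℝ) ^ (θ * #s) := by
        rw [prod_const, Real.rpow_mul_natCast (Nat.cast_nonneg _)]
    _ ≤ ((s.lcm f : ℕ) : ℝ) ^ (1 : ℝ) :=
        Real.rpow_le_rpow_of_exponent_le (Nat.one_le_cast.2 lcm_pos) hθs
    _ = (s.lcm f : ℕ) := Real.rpow_one _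

-- The Dirichlet convolution of `f` with itself dominates `#n.divisors * f n`.
lemma summable_card_divisors_mul {f : ℕ+ → ℝ} (hf0 : ∀ n, 0 ≤ f n)
    (hmul : ∀ a b, f (a * b) ≤ f a * f b) (hf : Summable f) :
    Summable fun n : ℕ+ => (#(n : ℕ).divisors : ℝ) * f n := by
  have summable_mul : Summable fun p : ℕ+ × ℕ+ => f (p.1 * p.2) :=
    (hf.mul_of_nonneg hf hf0 hf0).of_nonneg_of_le (fun p => hf0 _) fun p => hmul p.1 p.2
  have summable_sigma :
      Summable fun q : Σ n : ℕ+, (n : ℕ).divisorsAntidiagonal => f q.1 := by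
    refine (sigmaAntidiagonalEquivProd.summable_iff.2 summable_mul).congr fun q => ?_
    exact congrArg f (PNat.coe_injective (divisorsAntidiagonalFactors_eq q.2))
  refine summable_sigma.sigma.congr fun n => ?_
  dsimp only
  rw [tsum_fintype, sum_const, nsmul_eq_mul, card_univ, Fintype.card_coe,
    ← Nat.map_div_right_divisors, card_map]

lemma summable_card_divisors_pow_mul {f : ℕ+ → ℝ} (hf0 : ∀ n, 0 ≤ f n)
    (hmul : ∀ a b, f (a * b) ≤ f a * f b) (hf : Summable f) (k : ℕ) :
    Summable fun n : ℕ+ => (#(n : ℕ).divisors : ℝ) ^ k * f n := by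
  induction k with
  | zero => simpa using hf
  | succ k ih =>
    refine (summable_card_divisors_mul (fun n => mul_nonneg (by positivity) (hf0 n))
      (fun a b => ?_) ih).congr fun n => by ring
    have card_le : (#((a * b : ℕ+) : ℕ).divisors : ℝ)
        ≤ #(a : ℕ).divisors * #(b : ℕ).divisors := by
      exact_mod_cast card_divisors_mul_le a b
    calc (#((a * b : ℕ+) : ℕ).divisors : ℝ) ^ k * f (a * b)
        ≤ (#(a : ℕ).divisors * #(b : ℕ).divisors : ℝ) ^ k * (f a * f b) := by
          gcongr
          · exact hf0 _
          · exact hmul a b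
      _ = #(a : ℕ).divisors ^ k * f a * (#(b : ℕ).divisors ^ k * f b) := by ring

lemma summable_card_divisors_pow_mul_rpow_neg (k : ℕ) {s : ℝ} (hs : 1 < s) :
    Summable fun n : ℕ => (#n.divisors : ℝ) ^ k * (n : ℝ) ^ (-s) := by
  have summable_rpow : Summable fun n : ℕ+ => ((n : ℕ) : ℝ) ^ (-s) :=
    summable_pnat_iff_summable_nat (f := fun n : ℕ => (n : ℝ) ^ (-s)).2
      (Real.summable_nat_rpow.2 (by linarith))
  refine summable_pnat_iff_summable_nat.1
    (summable_card_divisors_pow_mul (fun n => by positivity) (fun a b => ?_) summable_rpow k)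
  rw [PNat.mul_coe, Nat.cast_mul, Real.mul_rpow (by positivity) (by positivity)]

lemma summable_prod_pi {ι : Type*} [Fintype ι] {κ : ι → Type*} {f : ∀ i, κ i → ℝ}
    (hf0 : ∀ i a, 0 ≤ f i a) (hf : ∀ i, Summable (f i)) :
    Summable fun a : ∀ i, κ i => ∏ i, f i (a i) := by
  classical
  refine summable_of_sum_le (c := ∏ i, ∑' a, f i a)
    (fun a => prod_nonneg fun i _ => hf0 i (a i)) fun u => ?_
  calc ∑ a ∈ u, ∏ i, f i (a i)
      ≤ ∑ a ∈ Fintype.piFinset fun i => u.image fun a => a i, ∏ i, f i (a i) :=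
        sum_le_sum_of_subset_of_nonneg
          (fun a ha => Fintype.mem_piFinset.2 fun i => mem_image_of_mem _ ha)
          fun a _ _ => prod_nonneg fun i _ => hf0 i (a i)
    _ = ∏ i, ∑ b ∈ u.image fun a => a i, f i b := (prod_univ_sum _ _).symm
    _ ≤ ∏ i, ∑' b, f i b :=
        prod_le_prod (fun i _ => sum_nonneg fun b _ => hf0 i b)
          fun i _ => (hf i).sum_le_tsum _ fun b _ => hf0 i b

lemma summable_and_tsum_le_of_sum_fiber_le {α β : Type*} {f : α → ℝ} (hf0 : ∀ a, 0 ≤ f a)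
    (g : α → β) {w : β → ℝ} (hw : Summable w)
    (hfw : ∀ b, ∀ u : Finset α, (∀ a ∈ u, g a = b) → ∑ a ∈ u, f a ≤ w b) :
    Summable f ∧ ∑' a, f a ≤ ∑' b, w b := by
  classical
  have hw0 : ∀ b, 0 ≤ w b := fun b => by simpa using hfw b ∅
  have partial_sum_le : ∀ u : Finset α, ∑ a ∈ u, f a ≤ ∑' b, w b := fun u =>
    calc ∑ a ∈ u, f a
        = ∑ b ∈ u.image g, ∑ a ∈ u with g a = b, f a :=
          (sum_fiberwise_of_maps_to (fun a ha => mem_image_of_mem g ha) f).symm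
      _ ≤ ∑ b ∈ u.image g, w b := sum_le_sum fun b _ => hfw b _ fun a ha => (mem_filter.1 ha).2
      _ ≤ ∑' b, w b := hw.sum_le_tsum _ fun b _ => hw0 b
  exact ⟨summable_of_sum_le hf0 partial_sum_le, Real.tsum_le_of_sum_le hf0 partial_sum_le⟩

lemma sum_Ioc_sum_divisors_le {f : ℕ → ℝ} (hf : ∀ n, 0 ≤ f n) (X : ℕ) :
    ∑ n ∈ Ioc 0 X, ∑ d ∈ n.divisors, f d ≤ X * ∑ d ∈ Ioc 0 X, f d / d := by
  calc ∑ n ∈ Ioc 0 X, ∑ d ∈ n.divisors, f d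
      = ∑ d ∈ Ioc 0 X, ∑ n ∈ Ioc 0 X with d ∣ n, f d := by
        refine sum_comm' fun n d => ?_
        simp only [mem_Ioc, Nat.mem_divisors, mem_filter]
        constructor
        · rintro ⟨⟨hn, hnX⟩, hdn, -⟩
          exact ⟨⟨⟨hn, hnX⟩, hdn⟩, Nat.pos_of_dvd_of_pos hdn hn, (Nat.le_of_dvd hn hdn).trans hnX⟩
        · rintro ⟨⟨hn, hdn⟩, -⟩
          exact ⟨hn, hdn, hn.1.ne'⟩
    _ = ∑ d ∈ Ioc 0 X, ((X / d : ℕ) : ℝ) * f d := by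
        simp only [sum_const, Nat.Ioc_filter_dvd_card_eq_div, nsmul_eq_mul]
    _ ≤ ∑ d ∈ Ioc 0 X, (X : ℝ) / d * f d := by
        gcongr with d
        · exact hf d
        · exact Nat.cast_div_le
    _ = X * ∑ d ∈ Ioc 0 X, f d / d := by
        rw [mul_sum]
        exact sum_congr rfl fun d _ => by ring

lemma sum_Ioc_filter_dvd {M : Type*} [AddCommMonoid M] (f : ℕ → M) (X : ℕ) {d : ℕ}
    (hd : 0 < d) : ∑ n ∈ Ioc 0 X with d ∣ n, f n = ∑ k ∈ Ioc 0 (X / d), f (d * k) := by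
  refine sum_nbij' (· / d) (d * ·) ?_ ?_ ?_ ?_ ?_ <;>
    simp only [mem_filter, mem_Ioc]
  · rintro n ⟨⟨hn, hnX⟩, hdn⟩
    exact ⟨Nat.div_pos (Nat.le_of_dvd hn hdn) hd, Nat.div_le_div_right hnX⟩
  · rintro k ⟨hk, hkX⟩
    exact ⟨⟨Nat.mul_pos hd hk, (Nat.mul_le_mul_left d hkX).trans (Nat.mul_div_le X d)⟩,
      dvd_mul_right d k⟩
  · exact fun n hn => Nat.mul_div_cancel' hn.2
  · exact fun k _ => Nat.mul_div_cancel_left k hd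
  · exact fun n hn => by rw [Nat.mul_div_cancel' hn.2]

lemma sum_Ioc_mul_gcd_le {h : ℕ → ℝ} (h0 : ∀ n, 0 ≤ h n)
    (hmul : ∀ a b, h (a * b) ≤ h a * h b) {C : ℝ} (hC : 0 ≤ C)
    (hsum : ∀ X : ℕ, ∑ n ∈ Ioc 0 X, h n ≤ C * X) (X : ℕ) {m : ℕ} (hm : m ≠ 0) :
    ∑ n ∈ Ioc 0 X, h n * n.gcd m ≤ C * X * ∑ d ∈ m.divisors, h d := by
  have multiples_le : ∀ d ∈ m.divisors, ∑ n ∈ Ioc 0 X with d ∣ n, h n * d ≤ C * X * h d := by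
    intro d hd
    have d_pos : 0 < d := Nat.pos_of_mem_divisors hd
    calc ∑ n ∈ Ioc 0 X with d ∣ n, h n * d
        = (∑ k ∈ Ioc 0 (X / d), h (d * k)) * d := by rw [← sum_mul, sum_Ioc_filter_dvd h X d_pos]
      _ ≤ (∑ k ∈ Ioc 0 (X / d), h d * h k) * d := by gcongr; exact hmul d _
      _ = h d * d * ∑ k ∈ Ioc 0 (X / d), h k := by rw [← mul_sum]; ring
      _ ≤ h d * d * (C * (X / d)) := by
          have := h0 d
          gcongr
          exact (hsum _).trans (by gcongr; exact Nat.cast_div_le)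
      _ = C * X * h d := by field_simp
  calc ∑ n ∈ Ioc 0 X, h n * n.gcd m
      ≤ ∑ n ∈ Ioc 0 X, ∑ d ∈ m.divisors with d ∣ n, h n * d := by
        refine sum_le_sum fun n _ => ?_
        refine single_le_sum (f := fun d : ℕ => h n * (d : ℝ)) (fun d _ => ?_) ?_
        · exact mul_nonneg (h0 n) d.cast_nonneg
        · simp [hm, Nat.gcd_dvd_left, Nat.gcd_dvd_right]
    _ = ∑ d ∈ m.divisors, ∑ n ∈ Ioc 0 X with d ∣ n, h n * d :=
        sum_comm' (by simp only [mem_filter]; tauto)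
    _ ≤ ∑ d ∈ m.divisors, C * X * h d := sum_le_sum multiples_le
    _ = C * X * ∑ d ∈ m.divisors, h d := (mul_sum _ _ _).symm

/-- The arithmetic function `n ↦ n / φ n`, which is submultiplicative and bounded on average.
Its value at `0` is `0`. -/
noncomputable def divTotient (n : ℕ) : ℝ := n / φ n

lemma divTotient_nonneg (n : ℕ) : 0 ≤ divTotient n := by
  unfold divTotient
  positivity

lemma divTotient_mul_le (a b : ℕ) :
    divTotient (a * b) ≤ divTotient a * divTotient b := by
  rcases Nat.eq_zero_or_pos a with rfl | ha
  · simp [divTotient]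
  rcases Nat.eq_zero_or_pos b with rfl | hb
  · simp [divTotient]
  have totient_pos : 0 < φ a * φ b := Nat.mul_pos (Nat.totient_pos.2 ha) (Nat.totient_pos.2 hb)
  simp only [divTotient]
  rw [div_mul_div_comm]
  exact_mod_cast div_le_div_of_nonneg_left (Nat.cast_nonneg (α := ℝ) (a * b))
    (Nat.cast_pos.2 totient_pos) (Nat.cast_le.2 (Nat.totient_super_multiplicative a b))

lemma divTotient_le_sum_divisors_inv_totient (n : ℕ) :
    divTotient n ≤ ∑ d ∈ n.divisors, (φ d : ℝ)⁻¹ := by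
  rcases Nat.eq_zero_or_pos n with rfl | hn
  · simp [divTotient]
  have totient_pos : (0 : ℝ) < φ n := Nat.cast_pos.2 (Nat.totient_pos.2 hn)
  rw [divTotient, div_le_iff₀ totient_pos, sum_mul]
  calc (n : ℝ) = ∑ d ∈ n.divisors, (φ (n / d) : ℝ) := by
        rw [Nat.sum_div_divisors n fun d => (φ d : ℝ)]
        exact_mod_cast (Nat.sum_totient n).symm
    _ ≤ ∑ d ∈ n.divisors, (φ d : ℝ)⁻¹ * φ n := by
        refine sum_le_sum fun d hd => ?_
        have totient_d_pos : (0 : ℝ) < φ d :=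
          Nat.cast_pos.2 (Nat.totient_pos.2 (Nat.pos_of_mem_divisors hd))
        rw [le_inv_mul_iff₀ totient_d_pos]
        have := Nat.totient_super_multiplicative d (n / d)
        rw [Nat.mul_div_cancel' (Nat.dvd_of_mem_divisors hd)] at this
        exact_mod_cast this

lemma divTotient_le_card_divisors (n : ℕ) : divTotient n ≤ #n.divisors :=
  calc divTotient n ≤ ∑ d ∈ n.divisors, (φ d : ℝ)⁻¹ := divTotient_le_sum_divisors_inv_totient n
    _ ≤ ∑ _d ∈ n.divisors, (1 : ℝ) := sum_le_sum fun d _ => Nat.cast_inv_le_one (φ d)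
    _ = #n.divisors := by simp

lemma inv_totient_le_card_divisors_div (n : ℕ) : (φ n : ℝ)⁻¹ ≤ #n.divisors / n := by
  rcases Nat.eq_zero_or_pos n with rfl | hn
  · simp
  rw [le_div_iff₀ (Nat.cast_pos.2 hn), inv_mul_eq_div]
  exact divTotient_le_card_divisors n

lemma exists_sum_Ioc_divTotient_le :
    ∃ C : ℝ, 0 ≤ C ∧ ∀ X : ℕ, ∑ n ∈ Ioc 0 X, divTotient n ≤ C * X := by
  have summable_card_divisors_div_sq : Summable fun d : ℕ => (#d.divisors : ℝ) / d ^ 2 :=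
    (summable_card_divisors_pow_mul_rpow_neg 1 one_lt_two).congr fun d => by
      rw [pow_one, Real.rpow_neg d.cast_nonneg, Real.rpow_two, div_eq_mul_inv]
  refine ⟨∑' d : ℕ, (#d.divisors : ℝ) / d ^ 2, tsum_nonneg fun d => by positivity, fun X => ?_⟩
  calc ∑ n ∈ Ioc 0 X, divTotient n
      ≤ ∑ n ∈ Ioc 0 X, ∑ d ∈ n.divisors, (φ d : ℝ)⁻¹ :=
        sum_le_sum fun n _ => divTotient_le_sum_divisors_inv_totient n
    _ ≤ X * ∑ d ∈ Ioc 0 X, (φ d : ℝ)⁻¹ / d := sum_Ioc_sum_divisors_le (fun d => by positivity) X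
    _ ≤ X * ∑ d ∈ Ioc 0 X, (#d.divisors : ℝ) / d ^ 2 := by
        simp only [sq, ← div_div]
        gcongr with d
        exact inv_totient_le_card_divisors_div d
    _ ≤ X * ∑' d : ℕ, (#d.divisors : ℝ) / d ^ 2 := by
        gcongr
        exact summable_card_divisors_div_sq.sum_le_tsum _ fun d _ => by positivity
    _ = (∑' d : ℕ, (#d.divisors : ℝ) / d ^ 2) * X := mul_comm _ _

lemma totient_mul_totient_le_totient_lcm_mul_gcd (a b : ℕ) :
    φ a * φ b ≤ φ (a.lcm b) * a.gcd b := by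
  rcases Nat.eq_zero_or_pos a with rfl | ha
  · simp
  have gcd_totient_pos : 0 < φ (a.gcd b) := Nat.totient_pos.2 (Nat.gcd_pos_of_pos_left b ha)
  have gcd_gcd_lcm : (a.gcd b).gcd (a.lcm b) = a.gcd b :=
    Nat.gcd_eq_left ((Nat.gcd_dvd_left a b).trans (Nat.dvd_lcm_left a b))
  have totient_mul_eq : φ (a * b) = φ (a.lcm b) * a.gcd b := by
    have h := Nat.totient_gcd_mul_totient_mul (a.gcd b) (a.lcm b)
    rw [gcd_gcd_lcm, Nat.gcd_mul_lcm, mul_assoc] at h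
    exact Nat.eq_of_mul_eq_mul_left gcd_totient_pos h
  exact totient_mul_eq ▸ Nat.totient_super_multiplicative a b

lemma div_totient_lcm_le (n m : ℕ) :
    (n : ℝ) / φ (n.lcm m) ≤ divTotient n * n.gcd m * (φ m : ℝ)⁻¹ := by
  rcases Nat.eq_zero_or_pos n with rfl | hn
  · simp [divTotient]
  rcases Nat.eq_zero_or_pos m with rfl | hm
  · simp
  have totient_n_pos : (0 : ℝ) < φ n := Nat.cast_pos.2 (Nat.totient_pos.2 hn)
  have totient_m_pos : (0 : ℝ) < φ m := Nat.cast_pos.2 (Nat.totient_pos.2 hm)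
  have totient_lcm_pos : (0 : ℝ) < φ (n.lcm m) :=
    Nat.cast_pos.2 (Nat.totient_pos.2 (Nat.lcm_pos hn hm))
  have totient_mul_le : (φ n * φ m : ℝ) ≤ φ (n.lcm m) * n.gcd m := by
    exact_mod_cast totient_mul_totient_le_totient_lcm_mul_gcd n m
  have one_div_le : 1 / (φ (n.lcm m) : ℝ) ≤ n.gcd m / (φ n * φ m) :=
    (div_le_div_iff₀ totient_lcm_pos (mul_pos totient_n_pos totient_m_pos)).2 (by linarith)
  calc (n : ℝ) / φ (n.lcm m) = n * (1 / φ (n.lcm m)) := div_eq_mul_one_div _ _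
    _ ≤ n * (n.gcd m / (φ n * φ m)) := by gcongr
    _ = divTotient n * n.gcd m * (φ m : ℝ)⁻¹ := by rw [divTotient]; ring

lemma exists_sum_Ioc_div_totient_lcm_le :
    ∃ C : ℝ, 0 ≤ C ∧ ∀ X m : ℕ, m ≠ 0 →
      ∑ n ∈ Ioc 0 X, (n : ℝ) / φ (n.lcm m) ≤ C * X * (#m.divisors ^ 3 / m) := by
  obtain ⟨C, hC, hCX⟩ := exists_sum_Ioc_divTotient_le
  refine ⟨C, hC, fun X m hm => ?_⟩
  have sum_divTotient_le : ∑ d ∈ m.divisors, divTotient d ≤ #m.divisors ^ 2 :=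
    calc ∑ d ∈ m.divisors, divTotient d
        ≤ ∑ _d ∈ m.divisors, (#m.divisors : ℝ) := by
          refine sum_le_sum fun d hd => (divTotient_le_card_divisors d).trans (Nat.cast_le.2 ?_)
          exact card_le_card (Nat.divisors_subset_of_dvd hm (Nat.dvd_of_mem_divisors hd))
      _ = #m.divisors ^ 2 := by rw [sum_const, nsmul_eq_mul, sq]
  calc ∑ n ∈ Ioc 0 X, (n : ℝ) / φ (n.lcm m)
      ≤ (∑ n ∈ Ioc 0 X, divTotient n * n.gcd m) * (φ m : ℝ)⁻¹ := by
        rw [sum_mul]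
        exact sum_le_sum fun n _ => div_totient_lcm_le n m
    _ ≤ (C * X * #m.divisors ^ 2) * (#m.divisors / m) := by
        gcongr
        · exact (sum_Ioc_mul_gcd_le divTotient_nonneg divTotient_mul_le hC hCX X hm).trans
            (by gcongr)
        · exact inv_totient_le_card_divisors_div m
    _ = C * X * (#m.divisors ^ 3 / m) := by ring

lemma card_divisors_lcm_pow_div_lcm_div_prod_le {ι : Type*} [Fintype ι] {M : ι → ℕ}
    (hM : ∀ i, M i ≠ 0) (k : ℕ) {θ : ℝ} (hθ : 0 ≤ θ) (hθι : θ * Fintype.card ι ≤ 1) :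
    (#(univ.lcm M).divisors : ℝ) ^ k / (univ.lcm M : ℕ) / ∏ i, (M i : ℝ)
      ≤ ∏ i, (#(M i).divisors : ℝ) ^ k * (M i : ℝ) ^ (-(1 + θ)) := by
  have M_pos : ∀ i, (0 : ℝ) < M i := fun i => Nat.cast_pos.2 (Nat.pos_of_ne_zero (hM i))
  have card_le : (#(univ.lcm M).divisors : ℝ) ≤ ∏ i, (#(M i).divisors : ℝ) := by
    exact_mod_cast card_divisors_finset_lcm_le univ M
  have prod_le : ∏ i, (M i : ℝ) ^ θ ≤ (univ.lcm M : ℕ) := prod_rpow_le_lcm (fun i _ => hM i) hθ hθι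
  have prod_pos : 0 < ∏ i, (M i : ℝ) ^ θ := prod_pos fun i _ => Real.rpow_pos_of_pos (M_pos i) θ
  calc (#(univ.lcm M).divisors : ℝ) ^ k / (univ.lcm M : ℕ) / ∏ i, (M i : ℝ)
      ≤ (∏ i, (#(M i).divisors : ℝ)) ^ k / (∏ i, (M i : ℝ) ^ θ) / ∏ i, (M i : ℝ) := by gcongr
    _ = ∏ i, (#(M i).divisors : ℝ) ^ k / (M i : ℝ) ^ θ / M i := by
        rw [← prod_pow, ← prod_div_distrib, ← prod_div_distrib]
    _ = ∏ i, (#(M i).divisors : ℝ) ^ k * (M i : ℝ) ^ (-(1 + θ)) := by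
        refine prod_congr rfl fun i _ => ?_
        rw [Real.rpow_neg (M_pos i).le, Real.rpow_one_add' (M_pos i).le (by positivity)]
        field_simp

lemma eulerTerm₂_nonneg (r : ℕ) (hr : 1 ≤ r) (N : Fin r → ℕ+) : 0 ≤ eulerTerm₂ r hr N := by
  unfold eulerTerm₂
  positivity

lemma eulerTerm₂_succ (s : ℕ) (hs : 1 ≤ s + 1) (N : Fin (s + 1) → ℕ+) :
    eulerTerm₂ (s + 1) hs N =
      (N 0 : ℕ) / φ ((N 0 : ℕ).lcm (univ.lcm fun i => (Fin.tail N i : ℕ))) /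
        ∏ i, ((Fin.tail N i : ℕ) : ℝ) := by
  have lcm_eq : (univ.lcm fun i => (N i : ℕ)) =
      (N 0 : ℕ).lcm (univ.lcm fun i => (Fin.tail N i : ℕ)) := by
    rw [Fin.univ_succ, cons_eq_insert, lcm_insert, map_eq_image, lcm_image]
    rfl
  have prod_eq : ∏ i ∈ univ.erase (0 : Fin (s + 1)), ((N i : ℕ) : ℝ) =
      ∏ i, ((Fin.tail N i : ℕ) : ℝ) := by
    rw [Fin.univ_succ, erase_cons, prod_map]
    rfl
  rw [eulerTerm₂, Fin.zero_eta, lcm_eq, prod_eq, div_div]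

lemma sum_eulerTerm₂_le_of_tail_eq {s : ℕ} (hs : 1 ≤ s + 1) {x : ℝ} {M : Fin s → ℕ+}
    {u : Finset {N : Fin (s + 1) → ℕ+ // ((N ⟨0, hs⟩ : ℕ) : ℝ) ≤ x}}
    (hu : ∀ N ∈ u, Fin.tail N.1 = M) :
    ∑ N ∈ u, eulerTerm₂ (s + 1) hs N.1 ≤
      (∑ n ∈ Ioc 0 ⌊x⌋₊, (n : ℝ) / φ (n.lcm (univ.lcm fun i => (M i : ℕ)))) /
        ∏ i, ((M i : ℕ) : ℝ) := by
  let head (N : {N : Fin (s + 1) → ℕ+ // ((N ⟨0, hs⟩ : ℕ) : ℝ) ≤ x}) : ℕ := N.1 0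
  have head_injOn : Set.InjOn head u := by
    intro N hN N' hN' h
    ext1
    rw [← Fin.cons_self_tail N.1, ← Fin.cons_self_tail N'.1, hu N hN, hu N' hN',
      PNat.coe_injective h]
  have image_head_subset : u.image head ⊆ Ioc 0 ⌊x⌋₊ :=
    image_subset_iff.2 fun N _ => mem_Ioc.2 ⟨(N.1 0).pos, Nat.le_floor N.2⟩
  rw [sum_div]
  calc ∑ N ∈ u, eulerTerm₂ (s + 1) hs N.1
      = ∑ n ∈ u.image head, (n : ℝ) / φ (n.lcm (univ.lcm fun i => (M i : ℕ))) /
          ∏ i, ((M i : ℕ) : ℝ) := by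
        rw [sum_image head_injOn]
        exact sum_congr rfl fun N hN => by rw [eulerTerm₂_succ, hu N hN]
    _ ≤ ∑ n ∈ Ioc 0 ⌊x⌋₊, (n : ℝ) / φ (n.lcm (univ.lcm fun i => (M i : ℕ))) /
          ∏ i, ((M i : ℕ) : ℝ) :=
        sum_le_sum_of_subset_of_nonneg image_head_subset fun n _ _ => by positivity

lemma exists_summable_sum_eulerTerm₂_le (s : ℕ) (hs : 1 ≤ s + 1) :
    ∃ w : (Fin s → ℕ+) → ℝ, (∀ M, 0 ≤ w M) ∧ Summable w ∧
      ∀ x : ℝ, 0 ≤ x → ∀ (M : Fin s → ℕ+)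
        (u : Finset {N : Fin (s + 1) → ℕ+ // ((N ⟨0, hs⟩ : ℕ) : ℝ) ≤ x}),
        (∀ N ∈ u, Fin.tail N.1 = M) → ∑ N ∈ u, eulerTerm₂ (s + 1) hs N.1 ≤ x * w M := by
  obtain ⟨C, hC, hCX⟩ := exists_sum_Ioc_div_totient_lcm_le
  set θ : ℝ := 1 / (s + 1) with hθ
  have θ_pos : 0 < θ := by positivity
  have θ_mul_le : θ * Fintype.card (Fin s) ≤ 1 := by
    rw [hθ, Fintype.card_fin, one_div_mul_eq_div, div_le_one (by positivity)]
    linarith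
  set v : ℕ → ℝ := fun n => (#n.divisors : ℝ) ^ 3 * (n : ℝ) ^ (-(1 + θ))
  have summable_v : Summable fun n : ℕ+ => v n :=
    summable_pnat_iff_summable_nat.2 (summable_card_divisors_pow_mul_rpow_neg 3 (by linarith))
  have v_nonneg : ∀ n, 0 ≤ v n := fun n => by positivity
  refine ⟨fun M => C * ∏ i, v (M i), fun M => mul_nonneg hC (prod_nonneg fun i _ => v_nonneg _),
    (summable_prod_pi (f := fun _ (n : ℕ+) => v n) (fun _ n => v_nonneg n)
      fun _ => summable_v).mul_left C,
    fun x hx M u hu => ?_⟩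
  set m : ℕ := univ.lcm fun i => (M i : ℕ)
  calc ∑ N ∈ u, eulerTerm₂ (s + 1) hs N.1
      ≤ (∑ n ∈ Ioc 0 ⌊x⌋₊, (n : ℝ) / φ (n.lcm m)) / ∏ i, ((M i : ℕ) : ℝ) :=
        sum_eulerTerm₂_le_of_tail_eq hs hu
    _ ≤ (C * ⌊x⌋₊ * (#m.divisors ^ 3 / m)) / ∏ i, ((M i : ℕ) : ℝ) := by
        gcongr
        exact hCX ⌊x⌋₊ m (lcm_ne_zero_iff.2 fun i _ => (M i).ne_zero)
    _ = C * ⌊x⌋₊ * (#m.divisors ^ 3 / m / ∏ i, ((M i : ℕ) : ℝ)) := mul_div_assoc _ _ _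
    _ ≤ C * x * ∏ i, v (M i) := by
        gcongr
        · exact Nat.floor_le hx
        · exact card_divisors_lcm_pow_div_lcm_div_prod_le (fun i => (M i).ne_zero) 3
            θ_pos.le θ_mul_le
    _ = x * (C * ∏ i, v (M i)) := by ring

end

/-- Fix `r ≥ 1`. There is a constant `C > 0` such that for every real
`x ≥ 1`, the family `n_1/(φ([n_1,…,n_r])·n_2⋯n_r)` over multi-indices with `n_1 ≤ x`
is summable with sum at most `C·x`. -/
theorem sum_first_div_totient_lcm_bigO (r : ℕ) (hr : 1 ≤ r) :
    ∃ C : ℝ, 0 < C ∧ ∀ x : ℝ, 1 ≤ x →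
      Summable (fun N : {N : Fin r → ℕ+ // ((N ⟨0, hr⟩ : ℕ) : ℝ) ≤ x} => eulerTerm₂ r hr N.1) ∧
      ∑' N : {N : Fin r → ℕ+ // ((N ⟨0, hr⟩ : ℕ) : ℝ) ≤ x}, eulerTerm₂ r hr N.1 ≤ C * x := by
  obtain ⟨s, rfl⟩ : ∃ s, r = s + 1 := Nat.exists_eq_add_of_le' hr
  obtain ⟨w, w_nonneg, summable_w, fiber_le⟩ := exists_summable_sum_eulerTerm₂_le s hr
  have tsum_w_nonneg : 0 ≤ ∑' M, w M := tsum_nonneg w_nonneg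
  refine ⟨(∑' M, w M) + 1, by positivity, fun x hx => ?_⟩
  have x_nonneg : 0 ≤ x := by linarith
  obtain ⟨summable_term, tsum_le⟩ := summable_and_tsum_le_of_sum_fiber_le
    (α := {N : Fin (s + 1) → ℕ+ // ((N ⟨0, hr⟩ : ℕ) : ℝ) ≤ x})
    (fun N => eulerTerm₂_nonneg (s + 1) hr N.1) (fun N => Fin.tail N.1)
    (summable_w.mul_left x) (fiber_le x x_nonneg)
  refine ⟨summable_term, tsum_le.trans ?_⟩
  rw [tsum_mul_left]
  linarith
end

section
/- There exists a positive integer B (depending only on K and α_1,…,α_r) such that for all positive integers n, t_1,…,t_r with t_i dividing n for every i, the degree [K(ζ_n, α_1^{1/t_1},…,α_r^{1/t_r}) : K(ζ_n)] divides the product t_1·t_2⋯t_r, and the quotient (t_1·t_2⋯t_r)/[K(ζ_n, α_1^{1/t_1},…,α_r^{1/t_r}) : K(ζ_n)] divides B. -/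
open scoped BigOperators

/-- A fixed primitive `n`-th root of unity in `ℂ` (for `n ≥ 1`). -/
noncomputable def primRoot (n : ℕ) : ℂ := Complex.exp (2 * Real.pi * Complex.I / n)

/-- The subfield `K(ζ_n, α_1^{1/t_1}, …, α_r^{1/t_r})` of `ℂ`, obtained by adjoining to `K`
a primitive `n`-th root of unity and, for each `i`, all complex roots of `X^{t_i} - α_i`. -/
noncomputable def kummerField (K : IntermediateField ℚ ℂ) {r : ℕ} (α : Fin r → ℂ)
    (n : ℕ) (t : Fin r → ℕ) : IntermediateField ℚ ℂ :=
  K ⊔ IntermediateField.adjoin ℚ ({primRoot n} ∪ ⋃ i, {z : ℂ | z ^ (t i) = α i})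

/-- The cyclotomic extension `K(ζ_n)` of `K` inside `ℂ`. -/
noncomputable def cycloField (K : IntermediateField ℚ ℂ) (n : ℕ) : IntermediateField ℚ ℂ :=
  K ⊔ IntermediateField.adjoin ℚ {primRoot n}

lemma cyclo_le_kummer (K : IntermediateField ℚ ℂ) {r : ℕ} (α : Fin r → ℂ)
    (n : ℕ) (t : Fin r → ℕ) : cycloField K n ≤ kummerField K α n t :=
  sup_le_sup_left (IntermediateField.adjoin.mono _ _ _ Set.subset_union_left) _

lemma base_le_kummer (K : IntermediateField ℚ ℂ) {r : ℕ} (α : Fin r → ℂ)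
    (n : ℕ) (t : Fin r → ℕ) : K ≤ kummerField K α n t :=
  le_sup_left

open Height

/-!
By Kummer theory, adjoining to `F = K(ζ_n)` roots `β_i` with `β_i ^ t_i = α_i` gives an extension
whose degree is the index in `ℤ^r` of the lattice of exponents `e` with `∏ β_i ^ e_i ∈ F`. This
lattice contains `∏ t_i ℤ`, so its index divides `∏ t_i`.

Conversely, if `γ = ∏ β_i ^ e_i` lies in `F`, then `γ ^ n` is a monomial in the `α_i` that becomes
an `n`-th power in an abelian extension of `K`, so by Schinzel its `w`-th power is an `n`-th power
in `K`, where `w` kills the roots of unity of `K`. By Northcott, the group generated by the `α_i`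
has finite index in its saturation in `Kˣ`, so the entries of a fixed multiple `(M * w) • e` are
divisible by the `t_i`. Hence `∏ t_i` divides `(M * w) ^ r` times the index.
-/

section Monomials

variable {ι G : Type*} [Fintype ι] [CommGroup G]

/-- The homomorphism `ℤ^ι → G` sending an exponent vector `e` to the monomial `∏ i, a i ^ e i`.
The family `a` is multiplicatively independent exactly when this map is injective. -/
def monomialHom (a : ι → G) : Multiplicative (ι → ℤ) →* G where
  toFun e := ∏ i, a i ^ e.toAdd i
  map_one' := by simp
  map_mul' e f := by simp [zpow_add, Finset.prod_mul_distrib]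

@[simp]
lemma monomialHom_ofAdd (a : ι → G) (e : ι → ℤ) :
    monomialHom a (.ofAdd e) = ∏ i, a i ^ e i := rfl

lemma range_monomialHom (a : ι → G) :
    (monomialHom a).range = Subgroup.closure (Set.range a) := by
  ext x
  rw [Subgroup.mem_closure_range_iff_of_fintype]
  exact ⟨fun ⟨e, he⟩ ↦ ⟨e.toAdd, he.symm⟩, fun ⟨e, he⟩ ↦ ⟨.ofAdd e, he.symm⟩⟩

/-- The lattice of exponent vectors `e` whose monomial `∏ i, b i ^ e i` lies in `H`. -/
def exponentLattice (H : Subgroup G) (b : ι → G) : AddSubgroup (ι → ℤ) :=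
  AddSubgroup.toSubgroup.symm (H.comap (monomialHom b))

@[simp]
lemma mem_exponentLattice {H : Subgroup G} {b : ι → G} {e : ι → ℤ} :
    e ∈ exponentLattice H b ↔ ∏ i, b i ^ e i ∈ H := Iff.rfl

lemma index_exponentLattice (H : Subgroup G) (b : ι → G) :
    (exponentLattice H b).index = H.relIndex (Subgroup.closure (Set.range b)) := by
  rw [← range_monomialHom, ← Subgroup.index_comap]
  exact (AddSubgroup.index_toSubgroup _).symm

end Monomials

section Lattices

variable {ι : Type*} [Fintype ι]

lemma index_pi_zmultiples (t : ι → ℕ) :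
    (AddSubgroup.pi Set.univ fun i ↦ AddSubgroup.zmultiples (t i : ℤ)).index = ∏ i, t i := by
  simp [AddSubgroup.index_pi, Int.index_zmultiples]

lemma index_dvd_prod_of_forall_mem {P : AddSubgroup (ι → ℤ)} {t : ι → ℕ}
    (hP : ∀ e : ι → ℤ, (∀ i, (t i : ℤ) ∣ e i) → e ∈ P) : P.index ∣ ∏ i, t i := by
  rw [← index_pi_zmultiples]
  refine AddSubgroup.index_dvd_of_le fun e he ↦ hP e fun i ↦ ?_
  exact Int.mem_zmultiples_iff.mp (he i (Set.mem_univ i))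

lemma prod_dvd_index_mul_pow {P : AddSubgroup (ι → ℤ)} {t : ι → ℕ} {N : ℕ} (hN : N ≠ 0)
    (hP : ∀ e ∈ P, ∀ i, (t i : ℤ) ∣ N * e i) :
    ∏ i, t i ∣ P.index * N ^ Fintype.card ι := by
  have hinj : Function.Injective (nsmulAddMonoidHom (α := ι → ℤ) N) := nsmul_right_injective hN
  rw [← index_pi_zmultiples t, ← Module.finrank_fintype_fun_eq_card (R := ℤ),
    ← AddSubgroup.index_range_nsmul (ι → ℤ), ← AddSubgroup.index_map_of_injective P hinj]
  refine AddSubgroup.index_dvd_of_le ?_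
  rintro _ ⟨e, he, rfl⟩ i -
  simpa [Int.mem_zmultiples_iff] using hP e he i

end Lattices

section Heights

variable {K ι : Type*} [Field K] [AdmissibleAbsValues K]

lemma exists_div_mem_closure_logHeight₁_le [Fintype ι] (a : ι → Kˣ) {x : Kˣ} {n : ℕ}
    (hn : 0 < n) (hx : x ^ n ∈ Subgroup.closure (Set.range a)) :
    ∃ y : Kˣ, x / y ∈ Subgroup.closure (Set.range a) ∧
      logHeight₁ (y : K) ≤ ∑ i, logHeight₁ (a i : K) := by
  obtain ⟨e, he⟩ := Subgroup.mem_closure_range_iff_of_fintype.mp hx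
  -- Dividing `x` by `z` reduces the exponents of the monomial `x ^ n` modulo `n`.
  let z : Kˣ := ∏ i, a i ^ (e i / n)
  have hpow : (x / z) ^ n = ∏ i, a i ^ (e i % n) := by
    rw [div_pow, he, ← Finset.prod_pow, ← Finset.prod_div_distrib]
    refine Finset.prod_congr rfl fun i _ ↦ ?_
    rw [← zpow_natCast, ← zpow_mul, div_eq_mul_inv, ← zpow_sub, Int.emod_def, mul_comm]
  have hheight : n * logHeight₁ ((x / z : Kˣ) : K) ≤ n * ∑ i, logHeight₁ (a i : K) := by
    rw [← logHeight₁_pow, ← Units.val_pow_eq_pow_val, hpow, Units.coe_prod, Finset.mul_sum]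
    refine (logHeight₁_prod_le _ _).trans (Finset.sum_le_sum fun i _ ↦ ?_)
    rw [Units.val_zpow_eq_zpow_val, logHeight₁_zpow]
    have hlt : (e i % n).natAbs ≤ n := by
      have := Int.emod_nonneg (e i) (Int.natCast_pos.mpr hn).ne'
      have := Int.emod_lt_of_pos (e i) (Int.natCast_pos.mpr hn)
      omega
    exact mul_le_mul_of_nonneg_right (mod_cast hlt) (zero_le_logHeight₁ _)
  refine ⟨x / z, ?_, le_of_mul_le_mul_left hheight (mod_cast hn)⟩
  rw [div_div_cancel]
  exact Subgroup.mem_closure_range_iff_of_fintype.mpr ⟨_, rfl⟩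

variable [Northcott (logHeight₁ (K := K))]

lemma finite_torsion_quotient_closure_range [Finite ι] (a : ι → Kˣ) :
    Finite (CommGroup.torsion (Kˣ ⧸ Subgroup.closure (Set.range a))) := by
  cases nonempty_fintype ι
  have hfin : {y : Kˣ | logHeight₁ (y : K) ≤ ∑ i, logHeight₁ (a i : K)}.Finite :=
    (Northcott.finite_le (h := logHeight₁ (K := K)) _).preimage Units.val_injective.injOn
  refine ((hfin.image QuotientGroup.mk).subset fun q hq ↦ ?_).to_subtype
  obtain ⟨n, hn, hqn⟩ := isOfFinOrder_iff_pow_eq_one.mp hq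
  obtain ⟨x, rfl⟩ := QuotientGroup.mk_surjective q
  rw [← QuotientGroup.mk_pow, QuotientGroup.eq_one_iff] at hqn
  obtain ⟨y, hxy, hy⟩ := exists_div_mem_closure_logHeight₁_le a hn hqn
  exact ⟨y, hy, (QuotientGroup.eq_iff_div_mem.mpr hxy).symm⟩

lemma exists_forall_pow_mem_closure_range [Finite ι] (a : ι → Kˣ) :
    ∃ M : ℕ, 0 < M ∧ ∀ (x : Kˣ) (n : ℕ), 0 < n → x ^ n ∈ Subgroup.closure (Set.range a) →
      x ^ M ∈ Subgroup.closure (Set.range a) := by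
  have := finite_torsion_quotient_closure_range a
  refine ⟨Nat.card (CommGroup.torsion (Kˣ ⧸ Subgroup.closure (Set.range a))), Nat.card_pos,
    fun x n hn hx ↦ ?_⟩
  rw [← QuotientGroup.eq_one_iff, QuotientGroup.mk_pow] at hx ⊢
  have htors : (x : Kˣ ⧸ Subgroup.closure (Set.range a)) ∈ CommGroup.torsion _ :=
    isOfFinOrder_iff_pow_eq_one.mpr ⟨n, hn, hx⟩
  exact congrArg Subtype.val (pow_card_eq_one' (x := (⟨_, htors⟩ : CommGroup.torsion _)))

lemma exists_forall_isOfFinOrder_pow_eq_one (K : Type*) [Field K] [AdmissibleAbsValues K]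
    [Northcott (logHeight₁ (K := K))] :
    ∃ w : ℕ, 0 < w ∧ ∀ x : Kˣ, IsOfFinOrder x → x ^ w = 1 := by
  obtain ⟨w, hw, hpow⟩ := exists_forall_pow_mem_closure_range (K := K) Fin.elim0
  simp only [Set.range_eq_empty, Subgroup.closure_empty, Subgroup.mem_bot] at hpow
  refine ⟨w, hw, fun x hx ↦ ?_⟩
  obtain ⟨n, hn, hxn⟩ := isOfFinOrder_iff_pow_eq_one.mp hx
  exact hpow x n hn hxn

lemma exists_forall_dvd_mul_of_pow_eq_prod [Fintype ι] {a : ι → Kˣ}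
    (ha : Function.Injective (monomialHom a)) :
    ∃ M : ℕ, 0 < M ∧ ∀ (x : Kˣ) (n : ℕ) (e : ι → ℤ), 0 < n → x ^ n = ∏ i, a i ^ e i →
      ∀ i, (n : ℤ) ∣ M * e i := by
  obtain ⟨M, hM, hpow⟩ := exists_forall_pow_mem_closure_range a
  refine ⟨M, hM, fun x n e hn hx i ↦ ?_⟩
  rw [← monomialHom_ofAdd] at hx
  obtain ⟨c, hc⟩ : x ^ M ∈ (monomialHom a).range := by
    rw [range_monomialHom]
    refine hpow x n hn ?_
    rw [← range_monomialHom, hx]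
    exact ⟨_, rfl⟩
  have hec : Multiplicative.ofAdd e ^ M = c ^ n :=
    ha <| by rw [map_pow, map_pow, ← hx, hc, pow_right_comm]
  exact ⟨c.toAdd i, by simpa using congrArg (fun f ↦ f.toAdd i) hec⟩

end Heights

section BaseUnits

variable (F L : Type*) [Field F] [Field L] [Algebra F L]

/-- The inclusion of `Fˣ` into `Lˣ`, for a field extension `L / F`. -/
abbrev unitsAlgebraMap : Fˣ →* Lˣ := Units.map (algebraMap F L : F →* L)

/-- The subgroup `Fˣ` of `Lˣ`, for a field extension `L / F`. -/
def baseUnits : Subgroup Lˣ := (unitsAlgebraMap F L).range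

variable {F L}

lemma unitsAlgebraMap_injective : Function.Injective (unitsAlgebraMap F L) :=
  Units.map_injective (algebraMap F L).injective

lemma unitsAlgebraMap_mem_baseUnits (x : Fˣ) : unitsAlgebraMap F L x ∈ baseUnits F L :=
  ⟨x, rfl⟩

lemma smul_eq_self_of_mem_baseUnits {u : Lˣ} (hu : u ∈ baseUnits F L) (σ : Gal(L/F)) :
    σ • u = u := by
  obtain ⟨x, rfl⟩ := hu
  ext
  simp [AlgEquiv.smul_units_def]

lemma mem_baseUnits_iff_forall_smul_eq [IsGalois F L] {u : Lˣ} :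
    u ∈ baseUnits F L ↔ ∀ σ : Gal(L/F), σ • u = u := by
  refine ⟨smul_eq_self_of_mem_baseUnits, fun hu ↦ ?_⟩
  obtain ⟨x, hx⟩ := (InfiniteGalois.mem_range_algebraMap_iff_fixed (u : L)).mpr fun σ ↦
    congrArg Units.val (hu σ)
  have hx0 : x ≠ 0 := by
    rintro rfl
    exact u.ne_zero (by rw [← hx, map_zero])
  exact ⟨Units.mk0 x hx0, Units.ext hx⟩

lemma smul_div_self_mem_rootsOfUnity {n : ℕ} {u : Lˣ} (hu : u ^ n ∈ baseUnits F L)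
    (σ : Gal(L/F)) : σ • u / u ∈ rootsOfUnity n L := by
  rw [mem_rootsOfUnity, div_pow, ← smul_pow', smul_eq_self_of_mem_baseUnits hu, div_self']

end BaseUnits

section Schinzel

variable {K F : Type*} [Field K] [Field F] [Algebra K F] {n : ℕ} [NeZero n]

/-- Writing `τ • γ = ζ ^ b * γ` and using that `τ` commutes with `σ`, the factors `ζ ^ (b * k)` in
`τ • (σ • γ) = σ • (τ • γ)` and `(τ • γ) ^ k` cancel. -/
lemma smul_div_pow_mem_baseUnits [IsGalois K F] [IsMulCommutative Gal(F/K)] {ζ : Fˣ}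
    (hζ : IsPrimitiveRoot ζ n) {γ : Fˣ} (hγ : γ ^ n ∈ baseUnits K F) {σ : Gal(F/K)} {k : ℕ}
    (hσ : σ • ζ = ζ ^ k) : σ • γ / γ ^ k ∈ baseUnits K F := by
  refine mem_baseUnits_iff_forall_smul_eq.mpr fun τ ↦ ?_
  obtain ⟨b, -, hb⟩ := hζ.eq_pow_of_mem_rootsOfUnity (smul_div_self_mem_rootsOfUnity hγ τ)
  have hτ : τ • γ = ζ ^ b * γ := by rw [hb, div_mul_cancel]
  have hcomm : τ • σ • γ = (ζ ^ b) ^ k * σ • γ := by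
    rw [smul_smul, mul_comm', mul_smul, hτ, smul_mul', smul_pow', hσ, pow_right_comm]
  rw [smul_div', smul_pow', hcomm, hτ, mul_pow, mul_div_mul_left_eq_div]

lemma div_pow_mem_range_powMonoidHom [IsGalois K F] [IsMulCommutative Gal(F/K)] {ζ : Fˣ}
    (hζ : IsPrimitiveRoot ζ n) {a : Kˣ} {γ : Fˣ}
    (hγ : γ ^ n = unitsAlgebraMap K F a) {σ : Gal(F/K)} {k : ℕ}
    (hσ : σ • ζ = ζ ^ k) : a / a ^ k ∈ (powMonoidHom n : Kˣ →* Kˣ).range := by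
  have hbase : γ ^ n ∈ baseUnits K F := ⟨a, hγ.symm⟩
  obtain ⟨d, hd⟩ := smul_div_pow_mem_baseUnits hζ hbase hσ
  refine ⟨d, unitsAlgebraMap_injective (L := F) ?_⟩
  rw [powMonoidHom_apply, map_pow, map_div, map_pow, hd, ← hγ, div_pow, ← smul_pow',
    smul_eq_self_of_mem_baseUnits hbase, pow_right_comm]

lemma exists_isPrimitiveRoot_of_smul_eq_pow_modEq [IsGalois K F] {ζ : Fˣ}
    (hζ : IsPrimitiveRoot ζ n) {g : ℕ} (hg : g ∣ n)
    (hmod : ∀ (σ : Gal(F/K)) (k : ℕ), σ • ζ = ζ ^ k → k ≡ 1 [MOD g]) :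
    ∃ η : Kˣ, IsPrimitiveRoot η g := by
  obtain ⟨q, rfl⟩ := hg
  have hfixed : ζ ^ q ∈ baseUnits K F := by
    refine mem_baseUnits_iff_forall_smul_eq.mpr fun σ ↦ ?_
    obtain ⟨k, -, hk⟩ := hζ.eq_pow_of_mem_rootsOfUnity (ξ := σ • ζ) <| by
      rw [mem_rootsOfUnity, ← smul_pow', hζ.pow_eq_one, smul_one]
    rw [smul_pow', ← hk, ← pow_mul]
    nth_rw 2 [← one_mul q]
    rw [pow_eq_pow_iff_modEq, ← hζ.eq_orderOf]
    exact (hmod σ k hk.symm).mul_right' q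
  obtain ⟨η, hη⟩ := hfixed
  refine ⟨η, .of_map_of_injective ?_ (unitsAlgebraMap_injective (L := F))⟩
  rw [hη]
  exact hζ.pow (NeZero.pos _) (mul_comm g q)

/-- One direction of Schinzel's theorem on abelian binomials: the order `g` of `a` modulo `n`-th
powers divides `w`, because `K` contains a primitive `g`-th root of unity. -/
theorem exists_pow_eq_pow_of_isCyclotomicExtension [IsCyclotomicExtension {n} K F] {w : ℕ}
    (hw : ∀ x : Kˣ, IsOfFinOrder x → x ^ w = 1) {a : Kˣ} {γ : Fˣ}
    (hγ : γ ^ n = unitsAlgebraMap K F a) : ∃ d : Kˣ, d ^ n = a ^ w := by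
  have := IsCyclotomicExtension.isGalois {n} K F
  have := IsCyclotomicExtension.isMulCommutative {n} K F
  have hζ := (IsCyclotomicExtension.zeta_spec n K F).isUnit_unit (NeZero.ne n)
  let g : ℕ := orderOf (a : Kˣ ⧸ (powMonoidHom n : Kˣ →* Kˣ).range)
  have hgn : g ∣ n := orderOf_dvd_of_pow_eq_one <| (QuotientGroup.eq_one_iff _).mpr ⟨a, rfl⟩
  obtain ⟨η, hη⟩ : ∃ η : Kˣ, IsPrimitiveRoot η g := by
    refine exists_isPrimitiveRoot_of_smul_eq_pow_modEq hζ hgn fun σ k hσ ↦ ?_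
    refine (pow_eq_pow_iff_modEq (x := (a : Kˣ ⧸ (powMonoidHom n : Kˣ →* Kˣ).range)).mp ?_).symm
    rw [pow_one, ← QuotientGroup.mk_pow, QuotientGroup.eq_iff_div_mem]
    exact div_pow_mem_range_powMonoidHom hζ hγ hσ
  have hgw : g ∣ w := hη.dvd_of_pow_eq_one w <| hw η <|
    isOfFinOrder_iff_pow_eq_one.mpr ⟨g, Nat.pos_of_dvd_of_pos hgn (NeZero.pos n), hη.pow_eq_one⟩
  exact (QuotientGroup.eq_one_iff _).mp (orderOf_dvd_iff_pow_eq_one.mp hgw)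

end Schinzel

section Characters

variable {G L : Type*} [Group G] [Finite G] [Field L]

lemma card_monoidHom_units_le : Nat.card (G →* Lˣ) ≤ Nat.card G := by
  cases nonempty_fintype G
  have hind : LinearIndependent L fun χ : G →* Lˣ ↦ fun g ↦ (χ g : L) :=
    (linearIndependent_monoidHom G L).comp (fun χ ↦ (Units.coeHom L).comp χ) fun χ ψ h ↦
      MonoidHom.ext fun g ↦ Units.ext (DFunLike.congr_fun h g)
  have := Fintype.ofFinite (G →* Lˣ)
  simpa [Nat.card_eq_fintype_card] using hind.fintype_card_le_finrank

lemma card_eq_card_of_separates_points (X : Subgroup (G →* Lˣ))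
    (hX : ∀ g, (∀ χ ∈ X, χ g = 1) → g = 1) : Nat.card X = Nat.card G := by
  let evalOn : G →* (X →* Lˣ) := (MonoidHom.compHom' X.subtype).comp MonoidHom.eval
  have hinj : Function.Injective evalOn := (injective_iff_map_eq_one _).mpr fun g hg ↦
    hX g fun χ hχ ↦ show evalOn g ⟨χ, hχ⟩ = 1 by rw [hg, MonoidHom.one_apply]
  refine le_antisymm ?_ ?_
  · exact (Nat.card_le_card_of_injective _ X.subtype_injective).trans card_monoidHom_units_le
  · exact (Nat.card_le_card_of_injective _ hinj).trans card_monoidHom_units_le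

end Characters

section Kummer

open Polynomial

variable {F L : Type*} [Field F] [Field L] [Algebra F L]

variable (F L) in
/-- The group of Kummer elements of `L / F`: the units of `L` that every `σ ∈ Gal(L/F)` multiplies
by an element of `F`. -/
def kummerUnits : Subgroup Lˣ where
  carrier := {u | ∀ σ : Gal(L/F), σ • u / u ∈ baseUnits F L}
  one_mem' σ := by simp [one_mem]
  mul_mem' hu hv σ := by
    rw [smul_mul', mul_div_mul_comm]
    exact mul_mem (hu σ) (hv σ)
  inv_mem' hu σ := by
    rw [smul_inv', ← inv_div']
    exact inv_mem (hu σ)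

lemma mem_kummerUnits_of_pow_mem_baseUnits {n : ℕ} [NeZero n] {ζ : F} (hζ : IsPrimitiveRoot ζ n)
    {u : Lˣ} (hu : u ^ n ∈ baseUnits F L) : u ∈ kummerUnits F L := by
  intro σ
  have hζL := (hζ.isUnit_unit (NeZero.ne n)).map_of_injective (unitsAlgebraMap_injective (L := L))
  obtain ⟨i, -, hi⟩ := hζL.eq_pow_of_mem_rootsOfUnity (smul_div_self_mem_rootsOfUnity hu σ)
  rw [← hi]
  exact pow_mem (unitsAlgebraMap_mem_baseUnits _) i

variable (F L) in
/-- The Kummer pairing, sending a Kummer element `u` to the character `σ ↦ σ u / u` of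
`Gal(L/F)`. -/
def kummerPairing : kummerUnits F L →* Gal(L/F) →* Lˣ where
  toFun u :=
    { toFun σ := σ • (u : Lˣ) / u
      map_one' := by simp
      map_mul' σ τ := by
        have h := smul_eq_self_of_mem_baseUnits (u.2 τ) σ
        rw [smul_div'] at h
        rw [mul_smul, ← h]
        simp }
  map_one' := by ext; simp
  map_mul' u v := by ext; simp [mul_div_mul_comm]

lemma kummerPairing_apply (u : kummerUnits F L) (σ : Gal(L/F)) :
    kummerPairing F L u σ = σ • (u : Lˣ) / u := rfl

lemma ker_kummerPairing [IsGalois F L] :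
    (kummerPairing F L).ker = (baseUnits F L).subgroupOf (kummerUnits F L) := by
  ext u
  simp only [MonoidHom.mem_ker, Subgroup.mem_subgroupOf, mem_baseUnits_iff_forall_smul_eq,
    MonoidHom.ext_iff, kummerPairing_apply, MonoidHom.one_apply, div_eq_one]

lemma algEquiv_eq_one_of_smul_eq {S : Set Lˣ}
    (hS : IntermediateField.adjoin F (Units.val '' S) = ⊤) {σ : Gal(L/F)}
    (hσ : ∀ u ∈ S, σ • u = u) : σ = 1 := by
  refine AlgEquiv.ext fun x ↦ ?_
  induction (hS ▸ IntermediateField.mem_top : x ∈ IntermediateField.adjoin F (Units.val '' S))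
    using IntermediateField.adjoin_induction with
  | mem _ hx =>
    obtain ⟨u, hu, rfl⟩ := hx
    exact congrArg Units.val (hσ u hu)
  | algebraMap c => exact σ.commutes c
  | add x y _ _ hx hy => simpa using congrArg₂ (· + ·) hx hy
  | inv x _ hx => simpa using hx
  | mul x y _ _ hx hy => simpa using congrArg₂ (· * ·) hx hy

lemma exists_minpoly_dvd_X_pow_sub_C {n : ℕ} {u : Lˣ} (hu : u ^ n ∈ baseUnits F L) :
    ∃ c : F, c ≠ 0 ∧ (u : L) ^ n = algebraMap F L c ∧ minpoly F (u : L) ∣ X ^ n - C c := by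
  obtain ⟨c, hc⟩ := hu
  have hpow : (u : L) ^ n = algebraMap F L c := congrArg Units.val hc.symm
  exact ⟨c, c.ne_zero, hpow, minpoly.dvd _ _ (by simp [hpow])⟩

lemma isIntegral_of_pow_mem_baseUnits {n : ℕ} (hn : 0 < n) {u : Lˣ}
    (hu : u ^ n ∈ baseUnits F L) : IsIntegral F (u : L) := by
  obtain ⟨c, -, hc, -⟩ := exists_minpoly_dvd_X_pow_sub_C hu
  exact .of_pow hn (hc ▸ isIntegral_algebraMap)

lemma isGalois_of_pow_mem_baseUnits {n : ℕ} [NeZero n] {ζ : F} (hζ : IsPrimitiveRoot ζ n)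
    {S : Set Lˣ} (hS : ∀ u ∈ S, u ^ n ∈ baseUnits F L)
    (htop : IntermediateField.adjoin F (Units.val '' S) = ⊤) : IsGalois F L := by
  have hn : (n : F) ≠ 0 := hζ.neZero'.ne
  have hζL := hζ.map_of_injective (algebraMap F L).injective
  have hsep : Algebra.IsSeparable F L := by
    have : Algebra.IsSeparable F (IntermediateField.adjoin F (Units.val '' S)) := by
      rw [IntermediateField.isSeparable_adjoin_iff_isSeparable]
      rintro _ ⟨u, hu, rfl⟩
      obtain ⟨c, hc, -, hdvd⟩ := exists_minpoly_dvd_X_pow_sub_C (hS u hu)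
      exact (separable_X_pow_sub_C c hn hc).of_dvd hdvd
    rw [htop] at this
    exact .of_algHom F _ (IntermediateField.topEquiv (F := F) (E := L)).symm.toAlgHom
  refine isGalois_iff.mpr ⟨hsep, normal_iff.mpr fun x ↦ ⟨Algebra.IsSeparable.isIntegral F x, ?_⟩⟩
  refine IntermediateField.splits_of_mem_adjoin F L ?_ (htop ▸ IntermediateField.mem_top)
  rintro _ ⟨u, hu, rfl⟩
  obtain ⟨c, -, hpow, hdvd⟩ := exists_minpoly_dvd_X_pow_sub_C (hS u hu)
  refine ⟨isIntegral_of_pow_mem_baseUnits (NeZero.pos n) (hS u hu), ?_⟩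
  refine (X_pow_sub_C_splits_of_isPrimitiveRoot hζL hpow).of_dvd ?_ ?_
  · exact X_pow_sub_C_ne_zero (NeZero.pos n) _
  · simpa using map_dvd (mapRingHom (algebraMap F L)) hdvd

lemma finiteDimensional_of_pow_mem_baseUnits {n : ℕ} (hn : 0 < n) {S : Set Lˣ} (hfin : S.Finite)
    (hS : ∀ u ∈ S, u ^ n ∈ baseUnits F L)
    (htop : IntermediateField.adjoin F (Units.val '' S) = ⊤) : FiniteDimensional F L := by
  have := (hfin.image Units.val).to_subtype
  have hadjoin : FiniteDimensional F (IntermediateField.adjoin F (Units.val '' S)) :=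
    IntermediateField.finiteDimensional_adjoin <| by
      rintro _ ⟨u, hu, rfl⟩
      exact isIntegral_of_pow_mem_baseUnits hn (hS u hu)
  rw [htop] at hadjoin
  exact .equiv (IntermediateField.topEquiv (F := F) (E := L)).toLinearEquiv

theorem finrank_eq_relIndex_closure [FiniteDimensional F L] [IsGalois F L] {S : Set Lˣ}
    (hS : S ⊆ kummerUnits F L) (htop : IntermediateField.adjoin F (Units.val '' S) = ⊤) :
    Module.finrank F L = (baseUnits F L).relIndex (Subgroup.closure S) := by
  have hle : Subgroup.closure S ≤ kummerUnits F L := (Subgroup.closure_le _).mpr hS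
  let characters := (kummerPairing F L).comp (Subgroup.inclusion hle)
  have hker : characters.ker = (baseUnits F L).subgroupOf (Subgroup.closure S) := by
    rw [← MonoidHom.comap_ker, ker_kummerPairing]
    rfl
  have hsep : ∀ σ, (∀ χ ∈ characters.range, χ σ = 1) → σ = 1 := fun σ hσ ↦
    algEquiv_eq_one_of_smul_eq htop fun u hu ↦
      div_eq_one.mp <| hσ _ ⟨⟨u, Subgroup.subset_closure hu⟩, rfl⟩
  rw [← IsGalois.card_aut_eq_finrank, Subgroup.relIndex, ← hker, Subgroup.index_ker,
    card_eq_card_of_separates_points _ hsep]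

theorem finrank_eq_index_exponentLattice {ι : Type*} [Fintype ι] {n : ℕ} [NeZero n] {ζ : F}
    (hζ : IsPrimitiveRoot ζ n) {b : ι → Lˣ} (hb : ∀ i, b i ^ n ∈ baseUnits F L)
    (htop : IntermediateField.adjoin F (Set.range fun i ↦ (b i : L)) = ⊤) :
    Module.finrank F L = (exponentLattice (baseUnits F L) b).index := by
  have hrange : (Set.range fun i ↦ (b i : L)) = Units.val '' Set.range b := Set.range_comp _ _
  rw [hrange] at htop
  have hpow : ∀ u ∈ Set.range b, u ^ n ∈ baseUnits F L := Set.forall_mem_range.mpr hb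
  have := isGalois_of_pow_mem_baseUnits hζ hpow htop
  have := finiteDimensional_of_pow_mem_baseUnits (NeZero.pos n) (Set.finite_range b) hpow htop
  rw [index_exponentLattice, finrank_eq_relIndex_closure _ htop]
  exact fun u hu ↦ mem_kummerUnits_of_pow_mem_baseUnits hζ (hpow u hu)

end Kummer

section FieldExtensions

open IntermediateField

variable {F E ι : Type*} [Field F] [Field E] [Algebra F E]

lemma mem_of_pow_eq_pow_of_isPrimitiveRoot {L : IntermediateField F E} {n t : ℕ} [NeZero n]
    (ht : t ∣ n) {ζ x y : E} (hζ : IsPrimitiveRoot ζ n) (hζL : ζ ∈ L)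
    (hx : x ∈ L) (hxy : y ^ t = x ^ t) : y ∈ L := by
  obtain rfl | hx0 := eq_or_ne x 0
  · have ht0 : t ≠ 0 := ne_zero_of_dvd_ne_zero (NeZero.ne n) ht
    rw [zero_pow ht0, pow_eq_zero_iff ht0] at hxy
    exact hxy ▸ hx
  · have hroot : (y / x) ^ n = 1 := by
      obtain ⟨c, rfl⟩ := ht
      rw [pow_mul, div_pow, hxy, div_self (pow_ne_zero t hx0), one_pow]
    obtain ⟨k, -, hk⟩ := hζ.eq_pow_of_pow_eq_one hroot
    rw [← div_mul_cancel₀ y hx0, ← hk]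
    exact mul_mem (pow_mem hζL k) hx

lemma adjoin_range_eq_top_of_eq_adjoin_range_coe {L : IntermediateField F E} {b : ι → L}
    (hb : L = adjoin F (Set.range fun i ↦ (b i : E))) :
    adjoin F (Set.range b) = ⊤ := by
  refine lift_injective L ?_
  rw [lift_adjoin, lift_top, ← Set.range_comp]
  exact hb.symm

lemma monomialHom_injective_of_algebraMap [Fintype ι] {a : ι → Fˣ}
    (ha : ∀ e : ι → ℤ, ∏ i, algebraMap F E (a i) ^ e i = 1 → e = 0) :
    Function.Injective (monomialHom a) := by
  refine (injective_iff_map_eq_one _).mpr fun e he ↦ ha e.toAdd ?_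
  simpa [monomialHom] using congrArg (fun x : Fˣ ↦ algebraMap F E x) he

end FieldExtensions

section ComplexFields

open IntermediateField

variable (K : IntermediateField ℚ ℂ)

lemma isPrimitiveRoot_primRoot (n : ℕ) [NeZero n] : IsPrimitiveRoot (primRoot n) n :=
  Complex.isPrimitiveRoot_exp n (NeZero.ne n)

lemma primRoot_mem_cycloField (n : ℕ) : primRoot n ∈ cycloField K n :=
  (le_sup_right : _ ≤ cycloField K n) (mem_adjoin_simple_self ℚ _)

lemma le_cycloField (n : ℕ) : K ≤ cycloField K n := le_sup_left

noncomputable instance cycloFieldAlgebra (n : ℕ) : Algebra K (cycloField K n) :=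
  inferInstanceAs (Algebra K (extendScalars (le_cycloField K n)))

lemma extendScalars_cycloField (n : ℕ) :
    extendScalars (le_cycloField K n) = adjoin K {primRoot n} :=
  restrictScalars_injective ℚ <| (extendScalars_restrictScalars (le_cycloField K n)).trans
    (restrictScalars_adjoin_eq_sup ℚ K {primRoot n}).symm

instance isCyclotomicExtension_cycloField (n : ℕ) [NeZero n] :
    IsCyclotomicExtension {n} K (cycloField K n) := by
  have hζ := isPrimitiveRoot_primRoot n
  change IsCyclotomicExtension {n} K (extendScalars (le_cycloField K n)).toSubalgebra
  rw [extendScalars_cycloField, adjoin_simple_toSubalgebra_of_isAlgebraic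
    (hζ.isIntegral (NeZero.pos n)).tower_top.isAlgebraic]
  exact hζ.adjoin_isCyclotomicExtension K

variable {r n : ℕ} {t : Fin r → ℕ} {α β : Fin r → ℂ}

lemma kummerField_eq_sup_adjoin_range [NeZero n] (ht : ∀ i, t i ∣ n)
    (hβ : ∀ i, β i ^ t i = α i) :
    kummerField K α n t = cycloField K n ⊔ adjoin ℚ (Set.range β) := by
  rw [kummerField, adjoin_union, ← sup_assoc, ← cycloField]
  refine le_antisymm (sup_le le_sup_left <| adjoin_le_iff.mpr <| Set.iUnion_subset fun i z hz ↦ ?_)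
    (sup_le_sup_left (adjoin.mono _ _ _ ?_) _)
  · have hβi : β i ∈ cycloField K n ⊔ adjoin ℚ (Set.range β) :=
      (le_sup_right : adjoin ℚ (Set.range β) ≤ _) (subset_adjoin ℚ _ ⟨i, rfl⟩)
    exact mem_of_pow_eq_pow_of_isPrimitiveRoot (ht i) (isPrimitiveRoot_primRoot n)
      ((le_sup_left : cycloField K n ≤ _) (primRoot_mem_cycloField K n)) hβi (hz.trans (hβ i).symm)
  · exact Set.range_subset_iff.mpr fun i ↦ Set.mem_iUnion.mpr ⟨i, hβ i⟩

lemma extendScalars_kummerField [NeZero n] (ht : ∀ i, t i ∣ n) (hβ : ∀ i, β i ^ t i = α i) :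
    extendScalars (cyclo_le_kummer K α n t) = adjoin (cycloField K n) (Set.range β) :=
  restrictScalars_injective ℚ <| (extendScalars_restrictScalars (cyclo_le_kummer K α n t)).trans <|
    (kummerField_eq_sup_adjoin_range K ht hβ).trans
      (restrictScalars_adjoin_eq_sup ℚ (cycloField K n) (Set.range β)).symm

end ComplexFields

section KummerDegree

variable {ι : Type*} [Fintype ι]

section

variable {F L : Type*} [Field F] [Field L] [Algebra F L] {t : ι → ℕ} {a : ι → Fˣ} {b : ι → Lˣ}

lemma index_exponentLattice_baseUnits_dvd_prod
    (hb : ∀ i, b i ^ t i = unitsAlgebraMap F L (a i)) :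
    (exponentLattice (baseUnits F L) b).index ∣ ∏ i, t i := by
  refine index_dvd_prod_of_forall_mem fun e he ↦ mem_exponentLattice.mpr <| prod_mem fun i _ ↦ ?_
  obtain ⟨c, hc⟩ := he i
  rw [hc, zpow_mul, zpow_natCast, hb]
  exact zpow_mem (unitsAlgebraMap_mem_baseUnits _) c

lemma pow_eq_prod_zpow_of_prod_zpow_eq {n : ℕ} (ht : ∀ i, t i ∣ n)
    (hb : ∀ i, b i ^ t i = unitsAlgebraMap F L (a i)) {e : ι → ℤ} {γ : Fˣ}
    (hγ : unitsAlgebraMap F L γ = ∏ i, b i ^ e i) :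
    γ ^ n = ∏ i, a i ^ ((n / t i : ℕ) * e i) := by
  refine unitsAlgebraMap_injective (L := L) ?_
  rw [map_pow, hγ, map_prod, ← Finset.prod_pow]
  refine Finset.prod_congr rfl fun i _ ↦ ?_
  rw [map_zpow, ← hb, ← zpow_natCast, ← zpow_natCast, ← zpow_mul, ← zpow_mul, ← mul_assoc,
    ← Nat.cast_mul, Nat.mul_div_cancel' (ht i), mul_comm]

end

lemma dvd_mul_of_mem_exponentLattice_baseUnits {K F L : Type*} [Field K] [Field F] [Field L]
    [Algebra K F] [Algebra F L] {n : ℕ} [NeZero n] [IsCyclotomicExtension {n} K F] {M w : ℕ}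
    {a : ι → Kˣ}
    (hM : ∀ (x : Kˣ) (e : ι → ℤ), x ^ n = ∏ i, a i ^ e i → ∀ i, (n : ℤ) ∣ M * e i)
    (hw : ∀ x : Kˣ, IsOfFinOrder x → x ^ w = 1) {t : ι → ℕ} (ht : ∀ i, t i ∣ n) {b : ι → Lˣ}
    (hb : ∀ i, b i ^ t i = unitsAlgebraMap F L (unitsAlgebraMap K F (a i))) {e : ι → ℤ}
    (he : e ∈ exponentLattice (baseUnits F L) b) (i : ι) : (t i : ℤ) ∣ (M * w : ℕ) * e i := by
  obtain ⟨γ, hγ⟩ := mem_exponentLattice.mp he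
  have hγn := pow_eq_prod_zpow_of_prod_zpow_eq ht hb hγ
  simp only [← map_zpow, ← map_prod] at hγn
  obtain ⟨d, hd⟩ := exists_pow_eq_pow_of_isCyclotomicExtension hw hγn
  have hdvd : (n : ℤ) ∣ M * ((n / t i : ℕ) * e i * w) :=
    hM d (fun i ↦ (n / t i : ℕ) * e i * w) (by simp [hd, ← Finset.prod_pow, zpow_mul]) i
  have hquot : ((n / t i : ℕ) : ℤ) ≠ 0 :=
    mod_cast (Nat.div_ne_zero_iff_of_dvd (ht i)).mpr
      ⟨NeZero.ne n, ne_zero_of_dvd_ne_zero (NeZero.ne n) (ht i)⟩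
  refine Int.dvd_of_mul_dvd_mul_left hquot ?_
  rw [← Nat.cast_mul, Nat.div_mul_cancel (ht i)]
  convert hdvd using 1
  push_cast
  ring

theorem kummer_degree_failure_bounded_general {K : Type*} [Field K] [AdmissibleAbsValues K]
    [Northcott (logHeight₁ (K := K))] {a : ι → Kˣ} (ha : Function.Injective (monomialHom a)) :
    ∃ B : ℕ, 0 < B ∧ ∀ (n : ℕ) (t : ι → ℕ), 0 < n → (∀ i, t i ∣ n) →
      ∀ (F L : Type*) [Field F] [Field L] [Algebra K F] [Algebra F L]
        [IsCyclotomicExtension {n} K F] (b : ι → Lˣ),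
        (∀ i, b i ^ t i = unitsAlgebraMap F L (unitsAlgebraMap K F (a i))) →
        IntermediateField.adjoin F (Set.range fun i ↦ (b i : L)) = ⊤ →
        Module.finrank F L ∣ ∏ i, t i ∧ (∏ i, t i) / Module.finrank F L ∣ B := by
  obtain ⟨M, hM, hsat⟩ := exists_forall_dvd_mul_of_pow_eq_prod ha
  obtain ⟨w, hw, htors⟩ := exists_forall_isOfFinOrder_pow_eq_one K
  refine ⟨(M * w) ^ Fintype.card ι, by positivity, fun n t hn ht F L _ _ _ _ _ b hb htop ↦ ?_⟩
  have : NeZero n := ⟨hn.ne'⟩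
  have hpow (i) : b i ^ n ∈ baseUnits F L := by
    rw [← Nat.mul_div_cancel' (ht i), pow_mul, hb]
    exact pow_mem (unitsAlgebraMap_mem_baseUnits _) _
  rw [finrank_eq_index_exponentLattice (IsCyclotomicExtension.zeta_spec n K F) hpow htop]
  have hindex := index_exponentLattice_baseUnits_dvd_prod hb
  have hpos := Nat.pos_of_dvd_of_pos hindex <|
    Finset.prod_pos fun i _ ↦ Nat.pos_of_dvd_of_pos (ht i) hn
  refine ⟨hindex, (Nat.div_dvd_iff_dvd_mul hindex hpos).mpr ?_⟩
  exact prod_dvd_index_mul_pow (by positivity) fun e he ↦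
    dvd_mul_of_mem_exponentLattice_baseUnits (fun x e ↦ hsat x n e hn) htors ht hb he

end KummerDegree

/-- Let `K ⊆ ℂ` be a number field and `α_1,…,α_r ∈ K^×` multiplicatively
independent. There is a positive integer `B` such that for all positive integers
`n, t_1,…,t_r` with `t_i ∣ n` for all `i`, the degree
`[K(ζ_n, α_1^{1/t_1},…,α_r^{1/t_r}) : K(ζ_n)]` divides `t_1⋯t_r`, and the quotient
`(t_1⋯t_r)/[K(ζ_n, α_1^{1/t_1},…,α_r^{1/t_r}) : K(ζ_n)]` divides `B`. -/
theorem kummer_degree_failure_bounded {r : ℕ} (K : IntermediateField ℚ ℂ)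
    [FiniteDimensional ℚ K] (α : Fin r → ℂ)
    (hmem : ∀ i, α i ∈ K) (hα0 : ∀ i, α i ≠ 0)
    (hind : ∀ e : Fin r → ℤ, ∏ i, α i ^ e i = 1 → e = 0) :
    ∃ B : ℕ, 0 < B ∧ ∀ (n : ℕ) (t : Fin r → ℕ), 0 < n → (∀ i, 0 < t i) →
      (∀ i, t i ∣ n) →
      Module.finrank (cycloField K n)
          (IntermediateField.extendScalars (cyclo_le_kummer K α n t)) ∣ ∏ i, t i ∧
      (∏ i, t i) / Module.finrank (cycloField K n)
          (IntermediateField.extendScalars (cyclo_le_kummer K α n t)) ∣ B := by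
  have : NumberField K := { }
  let a (i : Fin r) : Kˣ := Units.mk0 ⟨α i, hmem i⟩ (Subtype.coe_ne_coe.mp (hα0 i))
  obtain ⟨B, hB, hdeg⟩ := kummer_degree_failure_bounded_general
    (monomialHom_injective_of_algebraMap (E := ℂ) (a := a) hind)
  refine ⟨B, hB, fun n t hn ht htn ↦ ?_⟩
  have : NeZero n := ⟨hn.ne'⟩
  choose β hβ using fun i ↦ IsAlgClosed.exists_pow_nat_eq (α i) (ht i)
  have hadjoin := extendScalars_kummerField K htn hβ
  have hβmem (i) : β i ∈ IntermediateField.extendScalars (cyclo_le_kummer K α n t) :=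
    hadjoin ▸ IntermediateField.subset_adjoin _ _ ⟨i, rfl⟩
  have hβ0 (i) : β i ≠ 0 := ne_zero_pow (ht i).ne' (hβ i ▸ hα0 i)
  exact hdeg n t hn htn (cycloField K n) _
    (fun i ↦ Units.mk0 ⟨β i, hβmem i⟩ (Subtype.coe_ne_coe.mp (hβ0 i)))
    (fun i ↦ Units.ext <| Subtype.ext <| hβ i) (adjoin_range_eq_top_of_eq_adjoin_range_coe hadjoin)
end
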